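/- For every integer k ≥ 2 there exists a constant μ (depending only on k) such that for all integers r ≥ k and all integers c_{k-1} > c_{k-2} > ... > c_1 > μ, one has f(r, k, ∑_{i=1}^{k-1} C(c_i, i)) = ∑_{i=1}^{k-1} C(c_i, i+1), where C(n,m) denotes the binomial coefficient. -/

import Mathlib

/-- A pair `(𝒜, ℬ)` of families, where `𝒜` consists of `r`-element subsets of `ℕ` and
`ℬ` of `(r-1)`-element subsets of `ℕ`, is `k`-valid if every `A ∈ 𝒜` has at least `k`
subsets of cardinality `r - 1` belonging to `ℬ`. -/
def ValidPair (r k : ℕ) (𝒜 ℬ : Finset (Finset ℕ)) : Prop :=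
  (∀ A ∈ 𝒜, A.card = r) ∧ (∀ B ∈ ℬ, B.card = r - 1) ∧
    ∀ A ∈ 𝒜, k ≤ (ℬ.filter (fun B => B ⊆ A)).card

/-- `f r k b` is the maximum of `|𝒜|` over all `k`-valid pairs `(𝒜, ℬ)` with `|ℬ| = b`. -/
noncomputable def f (r k b : ℕ) : ℕ :=
  sSup {a : ℕ | ∃ 𝒜 ℬ : Finset (Finset ℕ), ValidPair r k 𝒜 ℬ ∧ ℬ.card = b ∧ 𝒜.card = a}

/-!
Write `s = k - 1`. For the lower bound, the cascade family on `c 1 < ⋯ < c s` has the required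
cardinality and its whole shadow has the prescribed one; adding `r - k` common points to all sets
turns it into a `k`-valid pair of the right uniformity.

For the upper bound, let `(𝒜, ℬ)` be `k`-valid with `|𝒜|` larger than claimed, so that `|𝒜|` is at
least about `φ * |ℬ| ^ (1 + 1 / s)`. Two interlocking degree bounds show that some set `S` of
codimension `s` lies in a positive proportion of the members of `ℬ`. The sets `A ⊇ S` of `𝒜` with
`A \ {y} ∈ ℬ` for every `y ∈ A \ S` form, after removing `S`, a `k`-uniform family whose shadow is
no larger than the degree of `S`, and Kruskal-Katona applies to it. Since `x ^ (1 + 1 / s)` is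
strictly superadditive, only `m = O(|ℬ| ^ (1 - 1 / s))` members of `ℬ` can avoid `S`, and these
account for `O(m ^ (1 + 1 / s))` members of `𝒜`. A shadow that falls short of the cascade by such
an `m` costs more than that: `C(j, s - 1) ≤ m` missing shadow sets leave room for `C(j, s)`
further sets, which is of order `m ^ (1 + 1 / (s - 1))`.
-/

namespace PartialShadow

open Finset Finset.Colex
open scoped FinsetFamily

section Cone

variable {α : Type*} [DecidableEq α] {x : α} {r : ℕ} {𝒞 ℱ : Finset (Finset α)}

/-- The union of `𝒞` with the cone of apex `x` over `ℱ`. The apex is meant to lie in no member of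
`𝒞` or `ℱ`. -/
def cone (x : α) (𝒞 ℱ : Finset (Finset α)) : Finset (Finset α) :=
  𝒞 ∪ ℱ.image (insert x)

lemma mem_cone {A : Finset α} : A ∈ cone x 𝒞 ℱ ↔ A ∈ 𝒞 ∨ ∃ F ∈ ℱ, insert x F = A := by
  simp only [cone, mem_union, mem_image]

lemma card_cone (h𝒞 : ∀ A ∈ 𝒞, x ∉ A) (hℱ : ∀ A ∈ ℱ, x ∉ A) :
    #(cone x 𝒞 ℱ) = #𝒞 + #ℱ := by
  have hdisj : Disjoint 𝒞 (ℱ.image (insert x)) := by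
    refine disjoint_right.2 (forall_mem_image.2 fun F _ hF => h𝒞 _ hF (mem_insert_self x F))
  rw [cone, card_union_of_disjoint hdisj, card_image_of_injOn]
  exact (insert_erase_invOn.2.mono hℱ).injOn

lemma sized_cone (hℱ : ∀ A ∈ ℱ, x ∉ A) (h𝒞r : (𝒞 : Set (Finset α)).Sized (r + 1))
    (hℱr : (ℱ : Set (Finset α)).Sized r) : (cone x 𝒞 ℱ : Set (Finset α)).Sized (r + 1) := by
  intro A hA
  rcases mem_cone.1 hA with hA | ⟨F, hF, rfl⟩
  · exact h𝒞r hA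
  · rw [card_insert_of_notMem (hℱ F hF), hℱr hF]

lemma notMem_of_mem_shadow (h𝒞 : ∀ A ∈ 𝒞, x ∉ A) : ∀ A ∈ ∂ 𝒞, x ∉ A := by
  intro A hA hx
  obtain ⟨B, hB, hAB⟩ := exists_subset_of_mem_shadow hA
  exact h𝒞 B hB (hAB hx)

lemma shadow_cone (hℱ : ∀ A ∈ ℱ, x ∉ A) : ∂ (cone x 𝒞 ℱ) = cone x (∂ 𝒞 ∪ ℱ) (∂ ℱ) := by
  ext B
  simp only [mem_shadow_iff, mem_cone, mem_union]
  constructor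
  · rintro ⟨A, hA | ⟨F, hF, rfl⟩, a, ha, rfl⟩
    · exact .inl (.inl ⟨A, hA, a, ha, rfl⟩)
    · rcases eq_or_ne a x with rfl | hax
      · exact .inl (.inr (by rwa [erase_insert (hℱ F hF)]))
      · exact .inr ⟨_, ⟨F, hF, a, mem_of_mem_insert_of_ne ha hax, rfl⟩,
          (erase_insert_of_ne hax.symm).symm⟩
  · rintro ((⟨A, hA, a, ha, rfl⟩ | hB) | ⟨_, ⟨F, hF, a, ha, rfl⟩, rfl⟩)
    · exact ⟨A, .inl hA, a, ha, rfl⟩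
    · exact ⟨_, .inr ⟨B, hB, rfl⟩, x, mem_insert_self x B, erase_insert (hℱ B hB)⟩
    · have hax : x ≠ a := fun h => hℱ F hF (h ▸ ha)
      exact ⟨_, .inr ⟨F, hF, rfl⟩, a, mem_insert_of_mem ha, erase_insert_of_ne hax⟩

lemma shadow_cone_of_subset (hℱ : ∀ A ∈ ℱ, x ∉ A) (h : ℱ ⊆ ∂ 𝒞) :
    ∂ (cone x 𝒞 ℱ) = cone x (∂ 𝒞) (∂ ℱ) := by
  rw [shadow_cone hℱ, union_eq_left.2 h]

lemma shadow_powersetCard {s : Finset α} (h : r < #s) :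
    ∂ (powersetCard (r + 1) s) = powersetCard r s := by
  ext B
  rw [mem_shadow_iff_insert_mem]
  constructor
  · rintro ⟨a, ha, hB⟩
    rw [mem_powersetCard, card_insert_of_notMem ha] at hB
    exact mem_powersetCard.2 ⟨(subset_insert a B).trans hB.1, by omega⟩
  · intro hB
    obtain ⟨hBs, hB⟩ := mem_powersetCard.1 hB
    obtain ⟨a, has, haB⟩ := exists_mem_notMem_of_card_lt_card (hB ▸ h)
    exact ⟨a, haB, mem_powersetCard.2
      ⟨insert_subset has hBs, by rw [card_insert_of_notMem haB, hB]⟩⟩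

end Cone

section Cascade

variable {c : ℕ → ℕ} {d n : ℕ} {ℰ : Finset (Finset ℕ)}

/-- The cascade family: the members of `ℰ` joined to `{c 1, …, c n}`, together with, for each
`i ≤ n`, the `(i + d)`-subsets of `{0, …, c i - 1}` joined to `{c (i + 1), …, c n}`. For `ℰ = ∅` it
realises the sum `∑ i ∈ Icc 1 n, (c i).choose (i + d)`. -/
def cascade (ℰ : Finset (Finset ℕ)) (c : ℕ → ℕ) (d : ℕ) : ℕ → Finset (Finset ℕ)
  | 0 => ℰ
  | n + 1 => cone (c (n + 1)) (powersetCard (n + 1 + d) (range (c (n + 1)))) (cascade ℰ c d n)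

lemma notMem_of_mem_powersetCard_range {j m r : ℕ} (h : j ≤ m) :
    ∀ A ∈ powersetCard r (range j), m ∉ A := fun _ hA hm =>
  (mem_range.1 ((mem_powersetCard.1 hA).1 hm)).not_ge h

lemma add_one_le_of_strictMonoOn (hc : StrictMonoOn c (Set.Icc 1 n)) (h1 : 2 ≤ c 1) {i : ℕ}
    (hi : i ∈ Set.Icc 1 n) : i + 1 ≤ c i := by
  obtain ⟨h1i, hin⟩ := hi
  induction i, h1i using Nat.le_induction with
  | base => exact h1
  | succ i hi ih =>
    have hlt : c i < c (i + 1) := hc ⟨hi, by omega⟩ ⟨by omega, hin⟩ (by omega)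
    have := ih (by omega)
    omega

lemma strictMonoOn_of_succ (hc : StrictMonoOn c (Set.Icc 1 (n + 1))) :
    StrictMonoOn c (Set.Icc 1 n) :=
  hc.mono (Set.Icc_subset_Icc_right n.le_succ)

lemma lt_of_mem_cascade (hc : StrictMonoOn c (Set.Icc 1 (n + 1)))
    (hℰ : ∀ E ∈ ℰ, ∀ x ∈ E, x < c 1) : ∀ A ∈ cascade ℰ c d n, ∀ x ∈ A, x < c (n + 1) := by
  induction n with
  | zero => exact hℰ
  | succ n ih =>
    have hlt : c (n + 1) < c (n + 2) := hc ⟨by omega, by omega⟩ ⟨by omega, le_rfl⟩ (by omega)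
    intro A hA x hx
    rcases mem_cone.1 hA with hA | ⟨F, hF, rfl⟩
    · exact (mem_range.1 ((mem_powersetCard.1 hA).1 hx)).trans hlt
    · rcases mem_insert.1 hx with rfl | hx
      · exact hlt
      · exact (ih (strictMonoOn_of_succ hc) F hF x hx).trans hlt

lemma notMem_of_mem_cascade (hc : StrictMonoOn c (Set.Icc 1 (n + 1)))
    (hℰ : ∀ E ∈ ℰ, ∀ x ∈ E, x < c 1) : ∀ A ∈ cascade ℰ c d n, c (n + 1) ∉ A :=
  fun A hA hx => (lt_of_mem_cascade hc hℰ A hA _ hx).false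

lemma card_cascade (hc : StrictMonoOn c (Set.Icc 1 n)) (hℰ : ∀ E ∈ ℰ, ∀ x ∈ E, x < c 1) :
    #(cascade ℰ c d n) = ∑ i ∈ Icc 1 n, (c i).choose (i + d) + #ℰ := by
  induction n with
  | zero => simp [cascade]
  | succ n ih =>
    rw [cascade, card_cone (notMem_of_mem_powersetCard_range le_rfl) (notMem_of_mem_cascade hc hℰ),
      card_powersetCard, card_range, ih (strictMonoOn_of_succ hc), sum_Icc_succ_top (by omega)]
    ring

lemma sized_cascade (hc : StrictMonoOn c (Set.Icc 1 n)) (hℰ : ∀ E ∈ ℰ, ∀ x ∈ E, x < c 1)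
    (hℰd : (ℰ : Set (Finset ℕ)).Sized d) : (cascade ℰ c d n : Set (Finset ℕ)).Sized (n + d) := by
  induction n with
  | zero => simpa [cascade] using hℰd
  | succ n ih =>
    rw [cascade, Nat.add_right_comm]
    exact sized_cone (notMem_of_mem_cascade hc hℰ) (Set.sized_powersetCard _ _)
      (ih (strictMonoOn_of_succ hc))

lemma shadow_cascade (hc : StrictMonoOn c (Set.Icc 1 n)) (h1 : 2 ≤ c 1)
    (hℰ : ∀ E ∈ ℰ, ∀ x ∈ E, x < c 1) (hℰ1 : (ℰ : Set (Finset ℕ)).Sized 1) :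
    ∂ (cascade ℰ c 1 n) = cascade (∂ ℰ) c 0 n := by
  induction n with
  | zero => rfl
  | succ n ih =>
    have hn : n + 1 < #(range (c (n + 1))) := by
      rw [card_range]; exact add_one_le_of_strictMonoOn hc h1 ⟨by omega, le_rfl⟩
    have hsub : cascade ℰ c 1 n ⊆ ∂ (powersetCard (n + 1 + 1) (range (c (n + 1)))) := by
      rw [shadow_powersetCard hn]
      intro A hA
      exact mem_powersetCard.2 ⟨fun x hx => mem_range.2 (lt_of_mem_cascade hc hℰ A hA x hx),
        sized_cascade (strictMonoOn_of_succ hc) hℰ hℰ1 hA⟩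
    rw [cascade, shadow_cone_of_subset (notMem_of_mem_cascade hc hℰ) hsub, shadow_powersetCard hn,
      ih (strictMonoOn_of_succ hc), cascade]

end Cascade

section KruskalKatona

variable {c : ℕ → ℕ} {m n r : ℕ} {𝒜 𝒞 ℱ : Finset (Finset ℕ)}

lemma isInitSeg_powersetCard_range : IsInitSeg (powersetCard r (range m)) r := by
  refine ⟨Set.sized_powersetCard _ _, fun s t hs ⟨hts, ht⟩ =>
    mem_powersetCard.2 ⟨fun x hx => ?_, ht⟩⟩
  have hsm : ∀ b ∈ s, b < m := fun b hb => mem_range.1 ((mem_powersetCard.1 hs).1 hb)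
  exact mem_range.2 (forall_lt_mono hts.le hsm x hx)

lemma isInitSeg_cone (hℱ : IsInitSeg ℱ n) (hlt : ∀ A ∈ ℱ, ∀ x ∈ A, x < m) :
    IsInitSeg (cone m (powersetCard (n + 1) (range m)) ℱ) (n + 1) := by
  have hm : ∀ A ∈ ℱ, m ∉ A := fun A hA hx => (hlt A hA m hx).false
  refine ⟨sized_cone hm (Set.sized_powersetCard _ _) hℱ.1, fun A B hA hB => mem_cone.2 ?_⟩
  rcases mem_cone.1 hA with hA | ⟨F, hF, rfl⟩
  · exact .inl (isInitSeg_powersetCard_range.2 hA hB)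
  have hBm : ∀ b ∈ B, b ≤ m := forall_le_mono hB.1.le
    ((forall_mem_insert _ _ _).2 ⟨le_rfl, fun b hb => (hlt F hF b hb).le⟩)
  by_cases hmB : m ∈ B
  · refine .inr ⟨B.erase m, hℱ.2 hF ⟨?_, by rw [card_erase_of_mem hmB, hB.2]; rfl⟩,
      insert_erase hmB⟩
    have h := (toColex_sdiff_lt_toColex_sdiff (u := {m}) (by simpa using hmB) (by simp)).2 hB.1
    simpa only [sdiff_singleton_eq_erase, erase_insert (hm F hF)] using h
  · refine .inl (mem_powersetCard.2 ⟨fun x hx => mem_range.2 ((hBm x hx).lt_of_ne ?_), hB.2⟩)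
    exact ne_of_mem_of_not_mem hx hmB

lemma isInitSeg_cascade (hc : StrictMonoOn c (Set.Icc 1 n)) (h1 : 2 ≤ c 1) :
    IsInitSeg (cascade {{0}} c 1 n) (n + 1) := by
  induction n with
  | zero => exact isInitSeg_powersetCard_range (r := 1) (m := 1)
  | succ n ih =>
    exact isInitSeg_cone (ih (strictMonoOn_of_succ hc)) (lt_of_mem_cascade hc (by simp; omega))

lemma exists_forall_mem_lt (𝒜 : Finset (Finset ℕ)) : ∃ n, ∀ A ∈ 𝒜, ∀ x ∈ A, x < n :=
  ⟨(𝒜.sup id).sup id + 1, fun A hA _ hx =>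
    Nat.lt_succ_of_le (le_sup (f := id) (mem_sup.2 ⟨A, hA, hx⟩))⟩

lemma shadow_map {α β : Type*} [DecidableEq α] [DecidableEq β] (e : α ↪ β)
    (𝒜 : Finset (Finset α)) :
    ∂ (𝒜.map (mapEmbedding e).toEmbedding) = (∂ 𝒜).map (mapEmbedding e).toEmbedding := by
  ext B
  simp only [mem_shadow_iff, mem_map, RelEmbedding.coe_toEmbedding, mapEmbedding_apply]
  constructor
  · rintro ⟨_, ⟨A, hA, rfl⟩, _, hx, rfl⟩
    obtain ⟨a, ha, rfl⟩ := mem_map.1 hx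
    exact ⟨A.erase a, ⟨A, hA, a, ha, rfl⟩, map_erase e A a⟩
  · rintro ⟨_, ⟨A, hA, a, ha, rfl⟩, rfl⟩
    exact ⟨A.map e, ⟨A, hA, rfl⟩, e a, mem_map_of_mem e ha, (map_erase e A a).symm⟩

lemma exists_eq_map_valEmbedding (h𝒜 : ∀ A ∈ 𝒜, ∀ x ∈ A, x < n) :
    ∃ 𝒜' : Finset (Finset (Fin n)),
      𝒜 = 𝒜'.map (mapEmbedding Fin.valEmbedding).toEmbedding := by
  have hsub : 𝒜 ⊆ univ.map (mapEmbedding (Fin.valEmbedding (n := n))).toEmbedding := fun A hA =>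
    mem_map.2 ⟨A.attachFin (h𝒜 A hA), mem_univ _, map_valEmbedding_attachFin (h𝒜 A hA)⟩
  obtain ⟨𝒜', -, h⟩ := subset_map_iff.1 hsub
  exact ⟨𝒜', h⟩

lemma kruskal_katona_nat (h𝒜 : (𝒜 : Set (Finset ℕ)).Sized r) (h𝒞 : IsInitSeg 𝒞 r)
    (hle : #𝒞 ≤ #𝒜) : #(∂ 𝒞) ≤ #(∂ 𝒜) := by
  obtain ⟨n, hn⟩ := exists_forall_mem_lt (𝒜 ∪ 𝒞)
  obtain ⟨𝒜', rfl⟩ := exists_eq_map_valEmbedding fun A hA => hn A (mem_union_left _ hA)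
  obtain ⟨𝒞', rfl⟩ := exists_eq_map_valEmbedding fun A hA => hn A (mem_union_right _ hA)
  rw [shadow_map, shadow_map, card_map, card_map]
  rw [card_map, card_map] at hle
  refine Finset.kruskal_katona (r := r) (fun A hA => ?_) hle ⟨fun A hA => ?_, fun A B hA hB => ?_⟩
  · simpa using h𝒜 (mem_map_of_mem _ hA)
  · simpa using h𝒞.1 (mem_map_of_mem _ hA)
  · have hlt := (toColex_image_lt_toColex_image Fin.val_strictMono).2 hB.1
    have hmem := h𝒞.2 (t := B.map Fin.valEmbedding) (mem_map_of_mem _ hA)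
      ⟨by simpa [map_eq_image] using hlt, by simpa using hB.2⟩
    simpa using hmem

lemma exists_isInitSeg_insert (hr : r ≠ 0) (h𝒞 : IsInitSeg 𝒞 r) :
    ∃ A ∉ 𝒞, IsInitSeg (insert A 𝒞) r := by
  have hex : ∃ i : ℕ, #(ofColex (orderIsoColex i)) = r ∧ ofColex (orderIsoColex i) ∉ 𝒞 := by
    obtain ⟨n, hn⟩ := exists_forall_mem_lt 𝒞
    refine ⟨orderIsoColex.symm (toColex (Ico n (n + r))), ?_⟩
    rw [OrderIso.apply_symm_apply, ofColex_toColex, Nat.card_Ico]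
    refine ⟨by omega, fun h => (hn _ h n ?_).false⟩
    exact mem_Ico.2 ⟨le_rfl, by omega⟩
  obtain ⟨hcard, hnot⟩ := Nat.find_spec hex
  refine ⟨_, hnot, ⟨fun A hA => ?_, fun A B hA hB => ?_⟩⟩
  · rcases mem_insert.1 hA with rfl | hA
    exacts [hcard, h𝒞.1 hA]
  rcases mem_insert.1 hA with rfl | hA
  · by_contra hnotB
    have hlt : orderIsoColex.symm (toColex B) < Nat.find hex := by
      rw [← orderIsoColex.lt_iff_lt, OrderIso.apply_symm_apply]
      exact hB.1
    refine Nat.find_min hex hlt ?_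
    rw [OrderIso.apply_symm_apply]
    exact ⟨hB.2, fun h => hnotB (mem_insert_of_mem h)⟩
  · exact mem_insert_of_mem (h𝒞.2 hA hB)

lemma exists_isInitSeg_card_eq (hr : r ≠ 0) (a : ℕ) :
    ∃ 𝒞 : Finset (Finset ℕ), IsInitSeg 𝒞 r ∧ #𝒞 = a := by
  induction a with
  | zero => exact ⟨∅, isInitSeg_empty, rfl⟩
  | succ a ih =>
    obtain ⟨𝒞, h𝒞, rfl⟩ := ih
    obtain ⟨A, hA, h⟩ := exists_isInitSeg_insert hr h𝒞
    exact ⟨insert A 𝒞, h, card_insert_of_notMem hA⟩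

lemma card_lt_choose_of_card_shadow_lt (h𝒜 : (𝒜 : Set (Finset ℕ)).Sized (r + 1)) (hm : r < m)
    (h : #(∂ 𝒜) < m.choose r) : #𝒜 < m.choose (r + 1) := by
  by_contra! hle
  have hkk := kruskal_katona_nat h𝒜 (isInitSeg_powersetCard_range (m := m)) (by simpa using hle)
  rw [shadow_powersetCard (by simpa using hm), card_powersetCard, card_range] at hkk
  omega

lemma card_le_of_card_shadow_le (hc : StrictMonoOn c (Set.Icc 1 n)) (h1 : 2 ≤ c 1)
    (h𝒜 : (𝒜 : Set (Finset ℕ)).Sized (n + 1))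
    (h : #(∂ 𝒜) ≤ ∑ i ∈ Icc 1 n, (c i).choose i) :
    #𝒜 ≤ ∑ i ∈ Icc 1 n, (c i).choose (i + 1) := by
  have hlt : ∀ E ∈ ({{0}} : Finset (Finset ℕ)), ∀ x ∈ E, x < c 1 := by simp; omega
  have hlt' : ∀ E ∈ ({∅} : Finset (Finset ℕ)), ∀ x ∈ E, x < c 1 := by simp
  by_contra! hgt
  have hkk := kruskal_katona_nat h𝒜 (isInitSeg_cascade hc h1)
    (by rw [card_cascade hc hlt, card_singleton]; exact hgt)
  rw [shadow_cascade hc h1 hlt (by simp [Set.Sized]), shadow_singleton,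
    card_cascade hc hlt', card_singleton] at hkk
  simp only [add_zero] at hkk
  omega

-- After compression to an initial segment, `𝒜` contains all `(n + 2)`-subsets of `{0, …, j - 1}`,
-- so a cone over the `(n + 1)`-subsets of that set enlarges the shadow by only `j.choose n`.
lemma card_add_choose_le_of_card_shadow_add_choose_le (hc : StrictMonoOn c (Set.Icc 1 (n + 1)))
    (h1 : 2 ≤ c 1) (h𝒜 : (𝒜 : Set (Finset ℕ)).Sized (n + 2)) {j : ℕ} (hj : n + 2 ≤ j)
    (hj𝒜 : j.choose (n + 2) ≤ #𝒜)
    (h : #(∂ 𝒜) + j.choose n ≤ ∑ i ∈ Icc 1 (n + 1), (c i).choose i) :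
    #𝒜 + j.choose (n + 1) ≤ ∑ i ∈ Icc 1 (n + 1), (c i).choose (i + 1) := by
  obtain ⟨𝒞, h𝒞, hcard⟩ := exists_isInitSeg_card_eq (r := n + 2) (by omega) #𝒜
  have hshadow : #(∂ 𝒞) ≤ #(∂ 𝒜) := kruskal_katona_nat h𝒜 h𝒞 hcard.le
  have hsub : powersetCard (n + 2) (range j) ⊆ 𝒞 := by
    rcases h𝒞.total isInitSeg_powersetCard_range with h | h
    · rw [eq_of_subset_of_card_le h (by simpa [hcard] using hj𝒜)]
    · exact h
  obtain ⟨x, hx⟩ := exists_forall_mem_lt 𝒞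
  have hx𝒞 : ∀ A ∈ 𝒞, max x j ∉ A := fun A hA hmem =>
    ((le_max_left x j).trans_lt (hx A hA _ hmem)).false
  have hxj (r : ℕ) : ∀ A ∈ powersetCard r (range j), max x j ∉ A :=
    notMem_of_mem_powersetCard_range (le_max_right x j)
  have hshadow_cone : ∂ (cone (max x j) 𝒞 (powersetCard (n + 1) (range j))) =
      cone (max x j) (∂ 𝒞) (powersetCard n (range j)) := by
    rw [shadow_cone_of_subset (hxj _), shadow_powersetCard (by rw [card_range]; omega)]
    rw [← shadow_powersetCard (by rw [card_range]; omega)]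
    exact shadow_mono hsub
  have hkk := card_le_of_card_shadow_le hc h1 (sized_cone (hxj _) h𝒞.1 (Set.sized_powersetCard _ _))
    (by rw [hshadow_cone, card_cone (notMem_of_mem_shadow hx𝒞) (hxj _), card_powersetCard,
      card_range]; omega)
  rwa [card_cone hx𝒞 (hxj _), hcard, card_powersetCard, card_range] at hkk

lemma sum_Icc_update_choose {a d : ℕ} (hn : 1 ≤ n) :
    ∑ i ∈ Icc 1 n, (Function.update c 1 a i).choose (i + d) + (c 1).choose (1 + d) =
      ∑ i ∈ Icc 1 n, (c i).choose (i + d) + a.choose (1 + d) := by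
  rw [← add_sum_Ioc_eq_sum_Icc hn, ← add_sum_Ioc_eq_sum_Icc hn, Function.update_self,
    sum_congr rfl fun i hi => by
      rw [Function.update_of_ne (by rw [mem_Ioc] at hi; omega)]]
  ring

lemma strictMonoOn_update_of_le (hc : StrictMonoOn c (Set.Icc 1 n)) {a : ℕ} (ha : a ≤ c 1) :
    StrictMonoOn (Function.update c 1 a) (Set.Icc 1 n) := by
  intro i hi j hj hij
  have hj1 : j ≠ 1 := by have := hi.1; omega
  rw [Function.update_of_ne hj1]
  rcases eq_or_ne i 1 with rfl | hi1
  · rw [Function.update_self]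
    exact ha.trans_lt (hc hi hj hij)
  · rw [Function.update_of_ne hi1]
    exact hc hi hj hij

lemma card_add_le_of_card_shadow_lt (hc : StrictMonoOn c (Set.Icc 1 n)) (hn : 1 ≤ n)
    (h1 : 3 ≤ c 1) (h𝒜 : (𝒜 : Set (Finset ℕ)).Sized (n + 1))
    (h : #(∂ 𝒜) < ∑ i ∈ Icc 1 n, (c i).choose i) :
    #𝒜 + (c 1 - 1) ≤ ∑ i ∈ Icc 1 n, (c i).choose (i + 1) := by
  have hshadow := sum_Icc_update_choose (c := c) (a := c 1 - 1) (d := 0) hn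
  have hsum := sum_Icc_update_choose (c := c) (a := c 1 - 1) (d := 1) hn
  have hpascal := Nat.choose_eq_choose_pred_add (n := c 1) (k := 1 + 1) (by omega) two_pos
  simp only [Nat.add_one_sub_one, add_zero, Nat.choose_one_right] at hshadow hpascal
  have hkk := card_le_of_card_shadow_le (strictMonoOn_update_of_le hc (Nat.sub_le _ 1))
    (by rw [Function.update_self]; omega) h𝒜 (by omega)
  omega

end KruskalKatona

section Validity

variable {α : Type*} [DecidableEq α] {r k s : ℕ} {x : α} {S : Finset α}
  {𝒜 ℬ ℱ 𝒢 : Finset (Finset α)}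

/-- `𝒜` and `ℬ` consist of sets of cardinality `r + 1` and `r` respectively, and at least `k` of the
`r`-subsets of each member of `𝒜` lie in `ℬ`. In contrast to `ValidPair`, the parameter `r` is the
cardinality of the members of `ℬ`, and an `r`-subset of `A` is recorded by the point of `A` that it
omits. -/
structure IsValid (r k : ℕ) (𝒜 ℬ : Finset (Finset α)) : Prop where
  sized_left : (𝒜 : Set (Finset α)).Sized (r + 1)
  sized_right : (ℬ : Set (Finset α)).Sized r
  le_card : ∀ A ∈ 𝒜, k ≤ #{x ∈ A | A.erase x ∈ ℬ}

/-- The degree of a set in a family: the number of members of the family that contain it. -/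
def degree (ℱ : Finset (Finset α)) (S : Finset α) : ℕ := #{F ∈ ℱ | S ⊆ F}

/-- The members of `ℱ` that do not contain `S`. -/
def avoiding (ℱ : Finset (Finset α)) (S : Finset α) : Finset (Finset α) := {F ∈ ℱ | ¬ S ⊆ F}

lemma mem_avoiding {F : Finset α} : F ∈ avoiding ℱ S ↔ F ∈ ℱ ∧ ¬ S ⊆ F := mem_filter

lemma degree_add_card_avoiding : degree ℱ S + #(avoiding ℱ S) = #ℱ :=
  card_filter_add_card_filter_not _

lemma degree_mono (h : ℱ ⊆ 𝒢) : degree ℱ S ≤ degree 𝒢 S :=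
  card_le_card (filter_subset_filter _ h)

lemma degree_memberSubfamily_of_mem (hx : x ∈ S) : degree (ℱ.memberSubfamily x) S = 0 := by
  rw [degree, card_eq_zero, filter_eq_empty_iff]
  exact fun F hF hSF => (mem_memberSubfamily.1 hF).2 (hSF hx)

lemma degree_memberSubfamily_le : degree (ℱ.memberSubfamily x) S ≤ degree ℱ (insert x S) := by
  refine card_le_card_of_injOn (insert x) (fun F hF => ?_)
    ((insert_erase_invOn.2.mono fun F hF => ?_).injOn)
  · obtain ⟨hF, hSF⟩ := mem_filter.1 hF
    exact mem_filter.2 ⟨(mem_memberSubfamily.1 hF).1, insert_subset_insert x hSF⟩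
  · exact (mem_memberSubfamily.1 (mem_filter.1 hF).1).2

lemma card_eq_split (x : α) (𝒜 ℬ : Finset (Finset α)) :
    #𝒜 = #(𝒜.nonMemberSubfamily x) +
      (#(𝒜.memberSubfamily x \ ℬ) + #(𝒜.memberSubfamily x ∩ ℬ)) := by
  rw [card_sdiff_add_card_inter, add_comm, card_memberSubfamily_add_card_nonMemberSubfamily]

lemma sized_memberSubfamily (h : (ℱ : Set (Finset α)).Sized (r + 1)) :
    (ℱ.memberSubfamily x : Set (Finset α)).Sized r := by
  intro F hF
  obtain ⟨hF, hx⟩ := mem_memberSubfamily.1 hF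
  simpa [card_insert_of_notMem hx] using h hF

-- Only the point `x` itself can be omitted from `insert x A` without being recorded in the link.
lemma card_filter_insert_le {A : Finset α} (hx : x ∉ A) :
    #{y ∈ insert x A | (insert x A).erase y ∈ ℬ} ≤
      #{y ∈ A | A.erase y ∈ ℬ.memberSubfamily x} + if A ∈ ℬ then 1 else 0 := by
  rw [filter_insert, erase_insert hx]
  have hsub : {y ∈ A | (insert x A).erase y ∈ ℬ} ⊆ {y ∈ A | A.erase y ∈ ℬ.memberSubfamily x} := by
    refine monotone_filter_right _ fun y hy hyℬ => ?_
    rw [erase_insert_of_ne (ne_of_mem_of_not_mem hy hx).symm] at hyℬ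
    exact mem_memberSubfamily.2 ⟨hyℬ, fun h => hx (mem_of_mem_erase h)⟩
  split_ifs
  · exact (card_insert_le _ _).trans (by gcongr)
  · exact card_le_card hsub

namespace IsValid

protected lemma avoiding (h : IsValid r k 𝒜 ℬ) (S : Finset α) :
    IsValid r k (avoiding 𝒜 S) (avoiding ℬ S) where
  sized_left _ hA := h.sized_left (mem_avoiding.1 hA).1
  sized_right _ hB := h.sized_right (mem_avoiding.1 hB).1
  le_card A hA := by
    obtain ⟨hA, hSA⟩ := mem_avoiding.1 hA
    refine (h.le_card A hA).trans (card_le_card (monotone_filter_right _ fun y _ hy => ?_))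
    exact mem_avoiding.2 ⟨hy, fun hS => hSA (hS.trans (erase_subset y A))⟩

lemma nonMemberSubfamily (h : IsValid r k 𝒜 ℬ) (x : α) :
    IsValid r k (𝒜.nonMemberSubfamily x) (ℬ.nonMemberSubfamily x) := by
  simpa only [PartialShadow.avoiding, Finset.nonMemberSubfamily, singleton_subset_iff]
    using h.avoiding {x}

lemma memberSubfamily_sdiff (h : IsValid (r + 1) k 𝒜 ℬ) (x : α) :
    IsValid r k (𝒜.memberSubfamily x \ ℬ) (ℬ.memberSubfamily x) where
  sized_left := (sized_memberSubfamily h.sized_left).mono (mod_cast sdiff_subset)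
  sized_right := sized_memberSubfamily h.sized_right
  le_card A hA := by
    obtain ⟨hA, hAℬ⟩ := mem_sdiff.1 hA
    obtain ⟨hA, hx⟩ := mem_memberSubfamily.1 hA
    simpa [hAℬ] using (h.le_card _ hA).trans (card_filter_insert_le hx)

lemma memberSubfamily_inter (h : IsValid (r + 1) (k + 1) 𝒜 ℬ) (x : α) :
    IsValid r k (𝒜.memberSubfamily x ∩ ℬ) (ℬ.memberSubfamily x) where
  sized_left := (sized_memberSubfamily h.sized_left).mono (mod_cast inter_subset_left)
  sized_right := sized_memberSubfamily h.sized_right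
  le_card A hA := by
    obtain ⟨hA, hAℬ⟩ := mem_inter.1 hA
    obtain ⟨hA, hx⟩ := mem_memberSubfamily.1 hA
    simpa [hAℬ] using (h.le_card _ hA).trans (card_filter_insert_le hx)

lemma exists_erase_mem (h : IsValid r (k + 1) 𝒜 ℬ) {A : Finset α} (hA : A ∈ 𝒜) :
    ∃ x ∈ A, A.erase x ∈ ℬ := by
  obtain ⟨x, hx⟩ := card_pos.1 (k.succ_pos.trans_le (h.le_card A hA))
  exact ⟨x, (mem_filter.1 hx).1, (mem_filter.1 hx).2⟩

lemma eq_empty_of_card_le_one (h : IsValid r (k + 2) 𝒜 ℬ) (hℬ : #ℬ ≤ 1) : 𝒜 = ∅ := by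
  refine eq_empty_of_forall_notMem fun A hA => ?_
  obtain ⟨y, hy, z, hz, hyz⟩ := one_lt_card.1 ((show 1 < k + 2 by omega).trans_le (h.le_card A hA))
  rw [mem_filter] at hy hz
  have heq : A.erase y = A.erase z := card_le_one.1 hℬ _ hy.2 _ hz.2
  exact hyz (erase_injOn A hy.1 hz.1 heq)

lemma exists_degree_max (h : IsValid r (s + 1) 𝒜 ℬ) (hne : 𝒜.Nonempty) :
    ∃ S, #S + s = r ∧ 0 < degree ℬ S ∧ ∀ T, #T + s = r → degree ℬ T ≤ degree ℬ S := by
  obtain ⟨A, hA⟩ := hne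
  have hsr : s ≤ r := by
    have := h.le_card A hA
    have := card_filter_le A (A.erase · ∈ ℬ)
    have := h.sized_left hA
    omega
  let candidates := ℬ.biUnion (powersetCard (r - s))
  have mem_candidates {T : Finset α} (hT : #T + s = r) {B} (hB : B ∈ ℬ) (hTB : T ⊆ B) :
      T ∈ candidates := mem_biUnion.2 ⟨B, hB, mem_powersetCard.2 ⟨hTB, by omega⟩⟩
  obtain ⟨x, -, hx⟩ := h.exists_erase_mem hA
  obtain ⟨S₀, hS₀, hS₀card⟩ := exists_subset_card_eq (n := r - s) (by rw [h.sized_right hx]; omega)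
  obtain ⟨S, hS, hmax⟩ := exists_max_image candidates (degree ℬ)
    ⟨S₀, mem_candidates (by omega) hx hS₀⟩
  obtain ⟨B, hB, hSB⟩ := mem_biUnion.1 hS
  rw [mem_powersetCard] at hSB
  refine ⟨S, by omega, card_pos.2 ⟨B, mem_filter.2 ⟨hB, hSB.1⟩⟩, fun T hT => ?_⟩
  rcases Nat.eq_zero_or_pos (degree ℬ T) with hzero | hpos
  · omega
  · obtain ⟨B, hB⟩ := card_pos.1 hpos
    exact hmax T (mem_candidates hT (mem_filter.1 hB).1 (mem_filter.1 hB).2)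

end IsValid

/-- The sets `A \ S`, where `A ∈ 𝒜` contains `S` and every set obtained from `A` by omitting a point
outside `S` belongs to `ℬ`. This is the part of the link of `S` whose whole shadow is controlled by
the members of `ℬ` containing `S`. -/
def strongLink (𝒜 ℬ : Finset (Finset α)) (S : Finset α) : Finset (Finset α) :=
  {A ∈ 𝒜 | S ⊆ A ∧ ∀ y ∈ A \ S, A.erase y ∈ ℬ}.image (· \ S)

lemma mem_strongLink {F : Finset α} :
    F ∈ strongLink 𝒜 ℬ S ↔ ∃ A ∈ 𝒜, (S ⊆ A ∧ ∀ y ∈ A \ S, A.erase y ∈ ℬ) ∧ A \ S = F := by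
  simp only [strongLink, mem_image, mem_filter, and_assoc]

lemma sized_strongLink (h : (𝒜 : Set (Finset α)).Sized (r + 1)) (hS : #S + s = r) :
    (strongLink 𝒜 ℬ S : Set (Finset α)).Sized (s + 1) := by
  intro F hF
  obtain ⟨A, hA, ⟨hSA, -⟩, rfl⟩ := mem_strongLink.1 hF
  rw [card_sdiff_of_subset hSA, h hA]
  omega

lemma card_shadow_strongLink_le : #(∂ (strongLink 𝒜 ℬ S)) ≤ degree ℬ S := by
  have hsub : ∂ (strongLink 𝒜 ℬ S) ⊆ {B ∈ ℬ | S ⊆ B}.image (· \ S) := by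
    intro F hF
    obtain ⟨_, hA, a, ha, rfl⟩ := mem_shadow_iff.1 hF
    obtain ⟨A, -, ⟨hSA, hAℬ⟩, rfl⟩ := mem_strongLink.1 hA
    have hS : S ⊆ A.erase a := subset_erase.2 ⟨hSA, (mem_sdiff.1 ha).2⟩
    exact mem_image.2 ⟨A.erase a, mem_filter.2 ⟨hAℬ a ha, hS⟩, erase_sdiff_comm A S a⟩
  exact (card_le_card hsub).trans card_image_le

lemma IsValid.exists_mem_erase_mem (h : IsValid r (s + 1) 𝒜 ℬ) (hS : #S + s = r) {A : Finset α}
    (hA : A ∈ 𝒜) (hSA : S ⊆ A) {y : α} (hy : y ∈ A \ S) (hyℬ : A.erase y ∉ ℬ) :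
    ∃ z ∈ S, A.erase z ∈ ℬ := by
  by_contra! hnot
  have hsub : {x ∈ A | A.erase x ∈ ℬ} ⊆ (A \ S).erase y := by
    intro x hx
    obtain ⟨hxA, hxℬ⟩ := mem_filter.1 hx
    refine mem_erase.2 ⟨?_, mem_sdiff.2 ⟨hxA, fun hxS => hnot x hxS hxℬ⟩⟩
    rintro rfl
    exact hyℬ hxℬ
  have hcard := (h.le_card A hA).trans (card_le_card hsub)
  rw [card_erase_of_mem hy, card_sdiff_of_subset hSA, h.sized_left hA] at hcard
  omega

-- If `A ⊇ S` does not contribute to the strong link, then `A \ {y} ∉ ℬ` for some `y ∈ A \ S`, so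
-- validity forces `A \ {z} ∈ ℬ` for some `z ∈ S`, and `A` is the union of `A \ {z}` and `S`.
lemma IsValid.card_le_card_strongLink_add (h : IsValid r (s + 1) 𝒜 ℬ) (hS : #S + s = r) :
    #𝒜 ≤ #(strongLink 𝒜 ℬ S) + #(avoiding ℬ S) + #(avoiding 𝒜 S) := by
  have hcover : 𝒜 ⊆ (strongLink 𝒜 ℬ S).image (· ∪ S) ∪ (avoiding ℬ S).image (· ∪ S) ∪
      avoiding 𝒜 S := by
    intro A hA
    by_cases hSA : S ⊆ A
    swap
    · exact mem_union_right _ (mem_avoiding.2 ⟨hA, hSA⟩)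
    refine mem_union_left _ ?_
    by_cases hall : ∀ y ∈ A \ S, A.erase y ∈ ℬ
    · exact mem_union_left _ (mem_image.2 ⟨A \ S, mem_strongLink.2 ⟨A, hA, ⟨hSA, hall⟩, rfl⟩,
        sdiff_union_of_subset hSA⟩)
    · push Not at hall
      obtain ⟨y, hy, hyℬ⟩ := hall
      obtain ⟨z, hzS, hzℬ⟩ := h.exists_mem_erase_mem hS hA hSA hy hyℬ
      refine mem_union_right _ (mem_image.2 ⟨A.erase z,
        mem_avoiding.2 ⟨hzℬ, fun hsub => notMem_erase z A (hsub hzS)⟩, ?_⟩)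
      rw [erase_union_of_mem hzS, union_eq_left.2 hSA]
  calc #𝒜 ≤ _ := card_le_card hcover
    _ ≤ #((strongLink 𝒜 ℬ S).image (· ∪ S)) + #((avoiding ℬ S).image (· ∪ S)) + #(avoiding 𝒜 S) :=
      (card_union_le _ _).trans (by gcongr; exact card_union_le _ _)
    _ ≤ _ := Nat.add_le_add_right (Nat.add_le_add card_image_le card_image_le) _

end Validity

section RpowInequalities

variable {g v x y t K : ℝ}

lemma one_sub_two_rpow_neg_mem_Ioc (hg : 0 < g) : 1 - (2 : ℝ) ^ (-g) ∈ Set.Ioc 0 1 := by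
  have hlt : (2 : ℝ) ^ (-g) < 1 := Real.rpow_lt_one_of_one_lt_of_neg one_lt_two (by linarith)
  have hpos : 0 < (2 : ℝ) ^ (-g) := by positivity
  exact ⟨by linarith, by linarith⟩

lemma rpow_add_rpow_add_min_mul_le (hg : 0 < g) (hx : 0 ≤ x) (hy : 0 ≤ y) :
    x ^ (1 + g) + y ^ (1 + g) + (1 - (2 : ℝ) ^ (-g)) * (min x y * (x + y) ^ g) ≤
      (x + y) ^ (1 + g) := by
  wlog hxy : y ≤ x generalizing x y
  · have := this hy hx (le_of_not_ge hxy)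
    rw [min_comm, add_comm y x] at this
    linarith
  have hlarge : x ^ g ≤ (x + y) ^ g := by gcongr; linarith
  have hsmall : y ^ g ≤ (2 : ℝ) ^ (-g) * (x + y) ^ g := calc
    y ^ g ≤ ((x + y) / 2) ^ g := by gcongr; linarith
    _ = (2 : ℝ) ^ (-g) * (x + y) ^ g := by
      rw [Real.div_rpow (by positivity) (by norm_num), Real.rpow_neg (by norm_num)]
      field_simp
  rw [min_eq_right hxy, Real.rpow_one_add' hx (by positivity),
    Real.rpow_one_add' hy (by positivity), Real.rpow_one_add' (by positivity) (by positivity)]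
  calc x * x ^ g + y * y ^ g + (1 - 2 ^ (-g)) * (y * (x + y) ^ g)
      ≤ x * (x + y) ^ g + y * (2 ^ (-g) * (x + y) ^ g) + (1 - 2 ^ (-g)) * (y * (x + y) ^ g) := by
        gcongr
    _ = (x + y) * (x + y) ^ g := by ring

lemma mul_rpow_add_rpow_one_add_le (hv : 0 < v) (hx : 0 ≤ x) (hy : 0 ≤ y) :
    x * (x + y) ^ v + y ^ (1 + v) ≤ (x + y) ^ (1 + v) := by
  have hle : y ^ v ≤ (x + y) ^ v := by gcongr; linarith
  rw [Real.rpow_one_add' hy (by positivity),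
    Real.rpow_one_add' (by positivity) (by positivity), add_mul]
  gcongr

-- If `x ≤ y`, write `q = q ^ g * q ^ (1 - g)` and bound the factors by `x + y` and by `hqx`.
lemma le_mul_min_mul_rpow {q : ℝ} (hg : 0 < g) (hg1 : g < 1) (hvg : v * (1 - g) = g) (hq : 0 ≤ q)
    (hx : 0 ≤ x) (hK : 1 ≤ K) (ht : 1 ≤ t) (hqy : q ≤ y) (hqx : q ≤ K * x ^ (1 + v) * t ^ v)
    (hxy : 1 ≤ x + y) : q ≤ K * (min x y * (x + y) ^ g) * t ^ g := by
  have hy : 0 ≤ y := hq.trans hqy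
  have htg : 1 ≤ t ^ g := Real.one_le_rpow ht hg.le
  rcases le_total x y with h | h
  · have hfst : q ^ g ≤ (x + y) ^ g := by gcongr; linarith
    have hsnd : q ^ (1 - g) ≤ K * x * t ^ g := calc
      q ^ (1 - g) ≤ (K * x ^ (1 + v) * t ^ v) ^ (1 - g) := by gcongr
      _ = K ^ (1 - g) * x * t ^ g := by
        rw [Real.mul_rpow (by positivity) (by positivity), Real.mul_rpow (by positivity)
          (by positivity), ← Real.rpow_mul hx, ← Real.rpow_mul (by positivity), hvg,
          show (1 + v) * (1 - g) = 1 by linarith, Real.rpow_one]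
      _ ≤ K * x * t ^ g := by
        gcongr
        exact Real.rpow_le_self_of_one_le hK (by linarith)
    calc q = q ^ g * q ^ (1 - g) := by rw [← Real.rpow_add' hq (by simp)]; simp
      _ ≤ (x + y) ^ g * (K * x * t ^ g) := by gcongr
      _ = _ := by rw [min_eq_left h]; ring
  · have hsum : 1 ≤ (x + y) ^ g := Real.one_le_rpow hxy hg.le
    rw [min_eq_right h]
    calc q ≤ 1 * (y * 1) * 1 := by linarith
      _ ≤ _ := by gcongr

lemma rpow_mul_rpow_le_of_mul_le (hx : 0 ≤ x) (hy : 0 < y) (hK : 1 ≤ K) (ht : 1 ≤ t) (hg : 0 < g)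
    (hvg : (1 - v) * g = v) (h : K * x * y ^ v * t ^ v ≤ t) :
    y ^ (1 + g) * x ^ g ≤ y ^ (1 + v) * t ^ v := by
  have ht0 : 0 < t := by linarith
  have hxy : x * y ^ v ≤ t ^ (1 - v) := calc
    x * y ^ v ≤ K * x * y ^ v := by
      rw [mul_assoc]
      exact le_mul_of_one_le_left (by positivity) hK
    _ ≤ t ^ (1 - v) := by
      rwa [Real.rpow_sub ht0, Real.rpow_one, le_div_iff₀ (by positivity)]
  calc y ^ (1 + g) * x ^ g = y ^ (1 + v) * (x * y ^ v) ^ g := by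
        rw [Real.mul_rpow hx (by positivity), ← Real.rpow_mul hy.le, mul_left_comm,
          ← Real.rpow_add hy, mul_comm, show 1 + v + v * g = 1 + g by linarith]
    _ ≤ y ^ (1 + v) * (t ^ (1 - v)) ^ g := by gcongr
    _ = y ^ (1 + v) * t ^ v := by rw [← Real.rpow_mul ht0.le, hvg]

end RpowInequalities

section DegreeBounds

variable (α : Type*) [DecidableEq α]

/-- The bound on `#𝒜` for `(s + 1)`-valid pairs `(𝒜, ℬ)` in terms of the largest degree in the lower
family `ℬ` of a set of codimension `s`. -/
def LowerDegreeBound (s : ℕ) (g K : ℝ) : Prop :=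
  ∀ ⦃r : ℕ⦄ ⦃𝒜 ℬ : Finset (Finset α)⦄ ⦃t : ℝ⦄, IsValid r (s + 1) 𝒜 ℬ → 1 ≤ t →
    (∀ S, #S + s = r → (degree ℬ S : ℝ) ≤ t) → (#𝒜 : ℝ) ≤ K * (#ℬ : ℝ) ^ (1 + g) * t ^ g

/-- The bound on `#𝒜` for `(s + 1)`-valid pairs `(𝒜, ℬ)` in terms of the largest degree in the upper
family `𝒜` of a set that has codimension `s` with respect to `ℬ`. -/
def UpperDegreeBound (s : ℕ) (g K : ℝ) : Prop :=
  ∀ ⦃r : ℕ⦄ ⦃𝒜 ℬ : Finset (Finset α)⦄ ⦃t : ℝ⦄, IsValid r (s + 1) 𝒜 ℬ → 1 ≤ t →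
    (∀ S, #S + s = r → (degree 𝒜 S : ℝ) ≤ t) → (#𝒜 : ℝ) ≤ K * (#ℬ : ℝ) ^ (1 + g) * t ^ g

variable {α} {r s : ℕ} {x : α} {g v t K : ℝ} {𝒜 ℬ : Finset (Finset α)}

lemma IsValid.card_le_sum_degree (h : IsValid r (s + 1) 𝒜 ℬ) : #𝒜 ≤ ∑ B ∈ ℬ, degree 𝒜 B := by
  have hcover : 𝒜 ⊆ ℬ.biUnion fun B => {A ∈ 𝒜 | B ⊆ A} := by
    intro A hA
    obtain ⟨x, -, hx⟩ := h.exists_erase_mem hA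
    exact mem_biUnion.2 ⟨_, hx, mem_filter.2 ⟨hA, erase_subset x A⟩⟩
  exact (card_le_card hcover).trans card_biUnion_le

lemma upperDegreeBound_zero : UpperDegreeBound α 0 1 1 := by
  intro r 𝒜 ℬ t h ht hdeg
  calc (#𝒜 : ℝ) ≤ ∑ B ∈ ℬ, (degree 𝒜 B : ℝ) := mod_cast h.card_le_sum_degree
    _ ≤ ∑ _B ∈ ℬ, t := sum_le_sum fun B hB => hdeg B (h.sized_right hB)
    _ = (#ℬ : ℝ) * t := by rw [sum_const, nsmul_eq_mul]
    _ ≤ (#ℬ : ℝ) ^ 2 * t := by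
      gcongr
      exact_mod_cast Nat.le_self_pow two_ne_zero _
    _ = _ := by norm_num

lemma exists_memberSubfamily_nonempty (hℬ : (ℬ : Set (Finset α)).Sized r) (hcard : 1 < #ℬ) :
    ∃ x, 0 < #(ℬ.memberSubfamily x) ∧ 0 < #(ℬ.nonMemberSubfamily x) := by
  obtain ⟨B, hB, C, hC, hBC⟩ := one_lt_card.1 hcard
  obtain ⟨x, hxB, hxC⟩ : ∃ x ∈ B, x ∉ C := by
    refine not_subset.1 fun hsub => hBC (eq_of_subset_of_card_le hsub ?_)
    rw [hℬ hB, hℬ hC]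
  refine ⟨x, card_pos.2 ⟨B.erase x, ?_⟩, card_pos.2 ⟨C, mem_nonMemberSubfamily.2 ⟨hC, hxC⟩⟩⟩
  exact mem_memberSubfamily.2 ⟨by rwa [insert_erase hxB], notMem_erase x B⟩

lemma UpperDegreeBound.card_memberSubfamily_inter_le (hU : UpperDegreeBound α s v K) (hK : 1 ≤ K)
    (hg : 0 < g) (hg1 : g < 1) (hvg : v * (1 - g) = g)
    (h : IsValid (r + 1) (s + 1 + 1) 𝒜 ℬ) (ht : 1 ≤ t)
    (hdeg : ∀ S, #S + (s + 1) = r + 1 → (degree ℬ S : ℝ) ≤ t) (hℬ : 0 < #ℬ) :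
    (#(𝒜.memberSubfamily x ∩ ℬ) : ℝ) ≤
      K * (min (#(ℬ.memberSubfamily x) : ℝ) #(ℬ.nonMemberSubfamily x) * (#ℬ : ℝ) ^ g) * t ^ g := by
  have hsum : (#ℬ : ℝ) = #(ℬ.memberSubfamily x) + #(ℬ.nonMemberSubfamily x) :=
    mod_cast (card_memberSubfamily_add_card_nonMemberSubfamily x ℬ).symm
  have hsub : 𝒜.memberSubfamily x ∩ ℬ ⊆ ℬ.nonMemberSubfamily x := fun A hA =>
    mem_nonMemberSubfamily.2
      ⟨mem_of_mem_inter_right hA, (mem_memberSubfamily.1 (mem_of_mem_inter_left hA)).2⟩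
  have hlink := hU (h.memberSubfamily_inter x) ht fun S hS =>
    (Nat.cast_le.2 (degree_mono inter_subset_right)).trans (hdeg S (by omega))
  rw [hsum]
  refine le_mul_min_mul_rpow hg hg1 hvg (by positivity) (by positivity) hK ht
    (mod_cast card_le_card hsub) hlink ?_
  rw [← hsum]
  exact_mod_cast hℬ

lemma degree_nonMemberSubfamily_le (S : Finset α)
    (hdeg : (degree ℬ S : ℝ) ≤ t) : (degree (ℬ.nonMemberSubfamily x) S : ℝ) ≤ t :=
  (Nat.cast_le.2 (degree_mono (filter_subset _ _))).trans hdeg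

lemma degree_memberSubfamily_le_of_forall (ht : 1 ≤ t)
    (hdeg : ∀ S, #S + s = r + 1 → (degree ℬ S : ℝ) ≤ t) {S : Finset α} (hS : #S + s = r) :
    (degree (ℬ.memberSubfamily x) S : ℝ) ≤ t := by
  by_cases hx : x ∈ S
  · rw [degree_memberSubfamily_of_mem hx, Nat.cast_zero]
    linarith
  · exact (Nat.cast_le.2 degree_memberSubfamily_le).trans
      (hdeg _ (by rw [card_insert_of_notMem hx]; omega))

-- Induction on `#ℬ`, splitting both families at a point `x` that lies in some but not all members
-- of `ℬ`; the sets `A ∋ x` with `A \ {x} ∈ ℬ` are paid for by the strict superadditivity of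
-- `y ^ (1 + g)`.
lemma UpperDegreeBound.lowerDegreeBound (hU : UpperDegreeBound α s v K) (hK : 1 ≤ K)
    (hg : 0 < g) (hg1 : g < 1) (hvg : v * (1 - g) = g) :
    LowerDegreeBound α (s + 1) g (K / (1 - 2 ^ (-g))) := by
  intro r 𝒜 ℬ t h ht hdeg
  have ⟨hd, _⟩ := one_sub_two_rpow_neg_mem_Ioc hg
  set d : ℝ := 1 - 2 ^ (-g)
  induction hb : #ℬ using Nat.strong_induction_on generalizing r 𝒜 ℬ with | _ b ih
  subst hb
  rcases le_or_gt #ℬ 1 with hℬ | hℬ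
  · rw [h.eq_empty_of_card_le_one hℬ, card_empty, Nat.cast_zero]
    positivity
  obtain ⟨x, hX, hY⟩ := exists_memberSubfamily_nonempty h.sized_right hℬ
  obtain ⟨r, rfl⟩ : ∃ q, r = q + 1 := by
    obtain ⟨B, hB⟩ := card_pos.1 hX
    have hBx := mem_memberSubfamily.1 hB
    exact ⟨#B, by rw [← h.sized_right hBx.1, card_insert_of_notMem hBx.2]⟩
  have hsum := card_memberSubfamily_add_card_nonMemberSubfamily x ℬ
  have hQ := hU.card_memberSubfamily_inter_le (x := x) hK hg hg1 hvg h ht hdeg (by omega)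
  have hN := ih _ (by omega) (h.nonMemberSubfamily x)
    (fun S hS => degree_nonMemberSubfamily_le S (hdeg S hS)) rfl
  have hP := ih _ (by omega) (h.memberSubfamily_sdiff x)
    (fun S hS => degree_memberSubfamily_le_of_forall ht hdeg hS) rfl
  have hconvex := rpow_add_rpow_add_min_mul_le (x := (#(ℬ.memberSubfamily x) : ℝ))
    (y := (#(ℬ.nonMemberSubfamily x) : ℝ)) hg (by positivity) (by positivity)
  rw [← Nat.cast_add, hsum] at hconvex
  set X : ℝ := ((#(ℬ.memberSubfamily x) : ℕ) : ℝ)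
  set Y : ℝ := ((#(ℬ.nonMemberSubfamily x) : ℕ) : ℝ)
  rw [card_eq_split x 𝒜 ℬ]
  push_cast
  calc _ ≤ K / d * Y ^ (1 + g) * t ^ g +
        (K / d * X ^ (1 + g) * t ^ g + K * (min X Y * (#ℬ : ℝ) ^ g) * t ^ g) := by gcongr
    _ = K / d * (X ^ (1 + g) + Y ^ (1 + g) + d * (min X Y * (#ℬ : ℝ) ^ g)) * t ^ g := by
      field_simp
      ring
    _ ≤ K / d * (#ℬ : ℝ) ^ (1 + g) * t ^ g := by gcongr

-- Induction on `#ℬ`. Let `S` have the largest degree in `ℬ`. If that degree is small, `hL` gives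
-- the bound directly; otherwise the members containing `S` can be removed.
lemma LowerDegreeBound.upperDegreeBound (hL : LowerDegreeBound α s g K) (hK : 1 ≤ K) (hg : 0 < g)
    (hv : 0 < v) (hvg : (1 - v) * g = v) : UpperDegreeBound α s v K := by
  intro r 𝒜 ℬ t h ht hdeg
  induction hb : #ℬ using Nat.strong_induction_on generalizing 𝒜 ℬ with | _ b ih
  subst hb
  rcases 𝒜.eq_empty_or_nonempty with rfl | hne
  · rw [card_empty, Nat.cast_zero]
    positivity
  obtain ⟨S, hS, hpos, hmax⟩ := h.exists_degree_max hne
  have hsum := degree_add_card_avoiding (ℱ := ℬ) (S := S)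
  have hsumℝ : (degree ℬ S : ℝ) + #(avoiding ℬ S) = #ℬ := mod_cast hsum
  rcases le_total t (K * degree ℬ S * (#ℬ : ℝ) ^ v * t ^ v) with hlarge | hsmall
  · have hrest := ih _ (by omega) (h.avoiding S)
      (fun T hT => (Nat.cast_le.2 (degree_mono (filter_subset _ _))).trans (hdeg T hT)) rfl
    have hpow := mul_rpow_add_rpow_one_add_le (x := degree ℬ S) (y := #(avoiding ℬ S)) hv
      (by positivity) (by positivity)
    rw [hsumℝ] at hpow
    calc (#𝒜 : ℝ) = degree 𝒜 S + #(avoiding 𝒜 S) := mod_cast degree_add_card_avoiding.symm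
      _ ≤ K * degree ℬ S * (#ℬ : ℝ) ^ v * t ^ v + K * (#(avoiding ℬ S) : ℝ) ^ (1 + v) * t ^ v := by
        gcongr
        exact (hdeg S hS).trans hlarge
      _ = K * (degree ℬ S * (#ℬ : ℝ) ^ v + (#(avoiding ℬ S) : ℝ) ^ (1 + v)) * t ^ v := by ring
      _ ≤ K * (#ℬ : ℝ) ^ (1 + v) * t ^ v := by gcongr
  · have hℬ : 0 < (#ℬ : ℝ) := mod_cast (by omega)
    calc (#𝒜 : ℝ) ≤ K * (#ℬ : ℝ) ^ (1 + g) * (degree ℬ S : ℝ) ^ g :=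
          hL h (mod_cast hpos) fun T hT => mod_cast hmax T hT
      _ ≤ K * ((#ℬ : ℝ) ^ (1 + v) * t ^ v) := by
        rw [mul_assoc]
        exact mul_le_mul_of_nonneg_left
          (rpow_mul_rpow_le_of_mul_le (by positivity) hℬ hK ht hg hvg hsmall) (by positivity)
      _ = _ := by ring

lemma one_le_div_one_sub_two_rpow_neg (hK : 1 ≤ K) (hg : 0 < g) : 1 ≤ K / (1 - 2 ^ (-g)) := by
  have ⟨hd, hd1⟩ := one_sub_two_rpow_neg_mem_Ioc hg
  rw [le_div_iff₀ hd]
  linarith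

lemma UpperDegreeBound.exists_lowerDegreeBound (hK : 1 ≤ K)
    (hU : UpperDegreeBound α s (1 / (2 * s + 1)) K) :
    ∃ K', 1 ≤ K' ∧ LowerDegreeBound α (s + 1) (1 / (2 * (s + 1))) K' := by
  have hg : 0 < 1 / (2 * ((s : ℝ) + 1)) := by positivity
  refine ⟨_, one_le_div_one_sub_two_rpow_neg hK hg, hU.lowerDegreeBound hK hg ?_ ?_⟩
  · rw [div_lt_one (by positivity)]
    linarith [s.cast_nonneg (α := ℝ)]
  · field_simp
    ring

lemma exists_lowerDegreeBound (s : ℕ) :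
    ∃ K, 1 ≤ K ∧ LowerDegreeBound α (s + 1) (1 / (2 * (s + 1))) K := by
  induction s with
  | zero =>
    exact UpperDegreeBound.exists_lowerDegreeBound le_rfl (by simpa using upperDegreeBound_zero)
  | succ s ih =>
    obtain ⟨K, hK, hL⟩ := ih
    refine UpperDegreeBound.exists_lowerDegreeBound hK ?_
    refine hL.upperDegreeBound hK (by positivity) (by positivity) ?_
    push_cast
    field_simp
    ring

lemma exists_card_le_mul_rpow_mul_degree_rpow (s : ℕ) : ∃ K : ℝ, 1 ≤ K ∧
    ∀ ⦃r : ℕ⦄ ⦃𝒜 ℬ : Finset (Finset α)⦄, IsValid r (s + 2) 𝒜 ℬ → 𝒜.Nonempty →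
      ∃ S, #S + (s + 1) = r ∧ 0 < degree ℬ S ∧ (#𝒜 : ℝ) ≤
        K * (#ℬ : ℝ) ^ (1 + 1 / (2 * ((s : ℝ) + 1))) *
          (degree ℬ S : ℝ) ^ (1 / (2 * ((s : ℝ) + 1))) := by
  obtain ⟨K, hK, hL⟩ := exists_lowerDegreeBound (α := α) s
  refine ⟨K, hK, fun r 𝒜 ℬ h hne => ?_⟩
  obtain ⟨S, hS, hpos, hmax⟩ := h.exists_degree_max hne
  exact ⟨S, hS, hpos, hL h (mod_cast hpos) fun T hT => mod_cast hmax T hT⟩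

end DegreeBounds

section BinomialAsymptotics

/-- The constant `φ` for which `C(m, s + 1) ∼ φ * C(m, s) ^ (1 + 1 / s)` as `m → ∞`. -/
noncomputable def chooseConst (s : ℕ) : ℝ := (s.factorial : ℝ) ^ (s⁻¹ : ℝ) / (s + 1)

variable {s m : ℕ} {b x : ℝ}

lemma chooseConst_pos : 0 < chooseConst s := by
  unfold chooseConst
  positivity

lemma add_one_mul_chooseConst_mul_rpow_inv (hx : 0 ≤ x) :
    (s + 1) * chooseConst s * x ^ (s⁻¹ : ℝ) = (s.factorial * x) ^ (s⁻¹ : ℝ) := by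
  rw [Real.mul_rpow (by positivity) hx, chooseConst, mul_div_cancel₀ _ (by positivity)]

lemma choose_succ_le_chooseConst_mul_rpow (hs : s ≠ 0) (h : (m.choose s : ℝ) ≤ b) :
    (m.choose (s + 1) : ℝ) ≤ chooseConst s * b ^ (1 + (s : ℝ)⁻¹) := by
  have hb : 0 ≤ b := (Nat.cast_nonneg _).trans h
  have hroot : ((m - s : ℕ) : ℝ) ≤ (s + 1) * chooseConst s * b ^ (s⁻¹ : ℝ) := by
    rw [add_one_mul_chooseConst_mul_rpow_inv hb, Real.le_rpow_inv_iff_of_pos (by positivity)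
      (by positivity) (by positivity), Real.rpow_natCast]
    calc ((m - s : ℕ) : ℝ) ^ s ≤ m.descFactorial s := mod_cast
          (Nat.pow_le_pow_left (by omega) s).trans (Nat.pow_sub_le_descFactorial m s)
      _ = s.factorial * m.choose s := mod_cast Nat.descFactorial_eq_factorial_mul_choose m s
      _ ≤ s.factorial * b := by gcongr
  have hrec : (m.choose (s + 1) : ℝ) * (s + 1) = m.choose s * (m - s : ℕ) :=
    mod_cast Nat.choose_succ_right_eq m s
  refine le_of_mul_le_mul_right ?_ (show (0 : ℝ) < s + 1 by positivity)
  calc (m.choose (s + 1) : ℝ) * (s + 1) = m.choose s * (m - s : ℕ) := hrec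
    _ ≤ b * ((s + 1) * chooseConst s * b ^ (s⁻¹ : ℝ)) := by gcongr
    _ = chooseConst s * b ^ (1 + (s : ℝ)⁻¹) * (s + 1) := by
      rw [Real.rpow_one_add' hb (by positivity)]
      ring

lemma chooseConst_mul_rpow_le_choose_succ_add (hs : s ≠ 0) (hb : 0 ≤ b) (h : b ≤ m.choose s) :
    chooseConst s * b ^ (1 + (s : ℝ)⁻¹) ≤ m.choose (s + 1) + b := by
  have hroot : (s + 1) * chooseConst s * b ^ (s⁻¹ : ℝ) ≤ m := by
    rw [add_one_mul_chooseConst_mul_rpow_inv hb, Real.rpow_inv_le_iff_of_pos (by positivity)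
      (by positivity) (by positivity), Real.rpow_natCast]
    calc s.factorial * b ≤ s.factorial * m.choose s := by gcongr
      _ = m.descFactorial s := mod_cast (Nat.descFactorial_eq_factorial_mul_choose m s).symm
      _ ≤ (m : ℝ) ^ s := mod_cast Nat.descFactorial_le_pow m s
  have hrec : (m.choose (s + 1) : ℝ) * (s + 1) = m.choose s * (m - s : ℕ) :=
    mod_cast Nat.choose_succ_right_eq m s
  have hsub : (m : ℝ) ≤ (m - s : ℕ) + s := mod_cast (by omega)
  refine le_of_mul_le_mul_right ?_ (show (0 : ℝ) < s + 1 by positivity)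
  calc chooseConst s * b ^ (1 + (s : ℝ)⁻¹) * (s + 1)
      = b * ((s + 1) * chooseConst s * b ^ (s⁻¹ : ℝ)) := by
        rw [Real.rpow_one_add' hb (by positivity)]
        ring
    _ ≤ b * ((m - s : ℕ) + s) := by
      gcongr
      exact hroot.trans hsub
    _ ≤ m.choose s * (m - s : ℕ) + b * (s + 1) := by
      rw [mul_add]
      gcongr
      linarith
    _ = (m.choose (s + 1) + b) * (s + 1) := by rw [← hrec]; ring

lemma exists_choose_le_lt_choose_succ (hs : s ≠ 0) {n : ℕ} (hn : n ≠ 0) :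
    ∃ m, s ≤ m ∧ m.choose s ≤ n ∧ n < (m + 1).choose s := by
  obtain ⟨q, rfl⟩ := Nat.exists_eq_add_one_of_ne_zero hs
  have hmono : StrictMono fun i => (i + (q + 1)).choose (q + 1) :=
    strictMono_nat_of_lt_succ fun i => by
      rw [Nat.add_right_comm, Nat.choose_succ_succ (i + (q + 1))]
      exact Nat.lt_add_of_pos_left (Nat.choose_pos (by omega))
  obtain ⟨i, hle, hlt⟩ := hmono.exists_between_of_tendsto_atTop hmono.tendsto_atTop (x := n + 1)
    (by simpa using Nat.pos_of_ne_zero hn)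
  refine ⟨i + (q + 1), by omega, Nat.lt_succ_iff.1 hle, ?_⟩
  rwa [Nat.add_right_comm]

lemma card_le_of_sized_of_card_shadow_le {𝒜 : Finset (Finset ℕ)} {n : ℕ} (hs : s ≠ 0)
    (h𝒜 : (𝒜 : Set (Finset ℕ)).Sized (s + 1)) (h : #(∂ 𝒜) ≤ n) :
    (#𝒜 : ℝ) ≤ chooseConst s * (n : ℝ) ^ (1 + (s : ℝ)⁻¹) + n := by
  have hφ := chooseConst_pos (s := s)
  rcases eq_or_ne n 0 with rfl | hn
  · have hlt := card_lt_choose_of_card_shadow_lt h𝒜 (Nat.lt_succ_self s)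
      (h.trans_lt (Nat.choose_pos s.le_succ))
    rw [Nat.choose_self, Nat.lt_one_iff] at hlt
    rw [hlt, Nat.cast_zero]
    positivity
  · obtain ⟨m, hsm, hle, hlt⟩ := exists_choose_le_lt_choose_succ hs hn
    have hKK := card_lt_choose_of_card_shadow_lt h𝒜 (Nat.lt_succ_of_le hsm) (h.trans_lt hlt)
    rw [Nat.choose_succ_succ, add_comm] at hKK
    calc (#𝒜 : ℝ) ≤ m.choose (s + 1) + m.choose s := mod_cast hKK.le
      _ ≤ _ := add_le_add (choose_succ_le_chooseConst_mul_rpow hs (mod_cast hle)) (mod_cast hle)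

lemma sum_choose_lt_choose_succ {c : ℕ → ℕ} {n : ℕ} (hn : 1 ≤ n)
    (hc : StrictMonoOn c (Set.Icc 1 n)) :
    ∑ i ∈ Icc 1 n, (c i).choose i < (c n + 1).choose n := by
  induction n, hn using Nat.le_induction with
  | base => simp
  | succ n hn ih =>
    have hlt : c n < c (n + 1) := hc ⟨hn, by omega⟩ ⟨by omega, le_rfl⟩ (by omega)
    rw [sum_Icc_succ_top (by omega), Nat.choose_succ_succ]
    gcongr
    exact (ih (hc.mono (Set.Icc_subset_Icc_right (by omega)))).trans_le
      (Nat.choose_le_choose n hlt)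

lemma chooseConst_mul_rpow_le_sum_choose_add {c : ℕ → ℕ} {n : ℕ} (hs : s ≠ 0)
    (hc : StrictMonoOn c (Set.Icc 1 s)) (hn : n = ∑ i ∈ Icc 1 s, (c i).choose i) :
    chooseConst s * (n : ℝ) ^ (1 + (s : ℝ)⁻¹) ≤
      (∑ i ∈ Icc 1 s, (c i).choose (i + 1) : ℕ) + 2 * n := by
  have hs1 : s ∈ Icc 1 s := mem_Icc.2 ⟨by omega, le_rfl⟩
  have hlt : n < (c s + 1).choose s := hn ▸ sum_choose_lt_choose_succ (by omega) hc
  have hle : (c s).choose s ≤ n :=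
    hn ▸ single_le_sum (f := fun i => (c i).choose i) (fun _ _ => Nat.zero_le _) hs1
  have hle' : (c s).choose (s + 1) ≤ ∑ i ∈ Icc 1 s, (c i).choose (i + 1) :=
    single_le_sum (f := fun i => (c i).choose (i + 1)) (fun _ _ => Nat.zero_le _) hs1
  have hmain := chooseConst_mul_rpow_le_choose_succ_add hs n.cast_nonneg (mod_cast hlt.le)
  have hpascal : (c s + 1).choose (s + 1) ≤ n + ∑ i ∈ Icc 1 s, (c i).choose (i + 1) := by
    rw [Nat.choose_succ_succ]
    gcongr
  have hpascalℝ : ((c s + 1).choose (s + 1) : ℝ) ≤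
      n + (∑ i ∈ Icc 1 s, (c i).choose (i + 1) : ℕ) := mod_cast hpascal
  linarith

end BinomialAsymptotics

section LargePairs

variable {s r : ℕ} {ε : ℝ} {S : Finset ℕ} {𝒜 ℬ : Finset (Finset ℕ)}

lemma exists_card_le_mul_degree {α : Type*} [DecidableEq α] (hs : s ≠ 0) (hε : 0 < ε) :
    ∃ M : ℝ, 1 ≤ M ∧ ∀ ⦃r : ℕ⦄ ⦃𝒜 ℬ : Finset (Finset α)⦄, IsValid r (s + 1) 𝒜 ℬ → 𝒜.Nonempty →
      ε * (#ℬ : ℝ) ^ (1 + (s : ℝ)⁻¹) ≤ #𝒜 →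
        ∃ S, #S + s = r ∧ 0 < degree ℬ S ∧ (#ℬ : ℝ) ≤ M * degree ℬ S := by
  obtain ⟨q, rfl⟩ := Nat.exists_eq_add_one_of_ne_zero hs
  obtain ⟨K, hK, hcard⟩ := exists_card_le_mul_rpow_mul_degree_rpow (α := α) q
  set v : ℝ := 1 / (2 * ((q : ℝ) + 1)) with hv
  have hv0 : 0 < v := by positivity
  have hexp : 1 + ((q + 1 : ℕ) : ℝ)⁻¹ = 1 + v + v := by
    rw [hv]
    push_cast
    field_simp
    ring
  refine ⟨max 1 ((K / ε) ^ v⁻¹), le_max_left _ _, fun r 𝒜 ℬ h hne hlarge => ?_⟩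
  obtain ⟨S, hS, hpos, hle⟩ := hcard h hne
  refine ⟨S, hS, hpos, ?_⟩
  have hℬ : 0 < (#ℬ : ℝ) := mod_cast hpos.trans_le (card_filter_le _ _)
  have hroot : (#ℬ : ℝ) ^ v ≤ K / ε * (degree ℬ S : ℝ) ^ v := by
    rw [div_mul_eq_mul_div, le_div_iff₀ hε]
    refine le_of_mul_le_mul_left ?_ (Real.rpow_pos_of_pos hℬ (1 + v))
    rw [hexp, Real.rpow_add hℬ] at hlarge
    linarith
  calc (#ℬ : ℝ) = ((#ℬ : ℝ) ^ v) ^ v⁻¹ := (Real.rpow_rpow_inv hℬ.le hv0.ne').symm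
    _ ≤ (K / ε * (degree ℬ S : ℝ) ^ v) ^ v⁻¹ := by gcongr
    _ = (K / ε) ^ v⁻¹ * degree ℬ S := by
      rw [Real.mul_rpow (by positivity) (by positivity),
        Real.rpow_rpow_inv (by positivity) hv0.ne']
    _ ≤ _ := by
      gcongr
      exact le_max_right _ _

lemma IsValid.card_le_rpow_degree_add (hs : s ≠ 0) (h : IsValid r (s + 1) 𝒜 ℬ) (hS : #S + s = r) :
    (#𝒜 : ℝ) ≤
      chooseConst s * (degree ℬ S : ℝ) ^ (1 + (s : ℝ)⁻¹) + #ℬ + #(avoiding 𝒜 S) := by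
  have hlink := card_le_of_sized_of_card_shadow_le hs (sized_strongLink h.sized_left hS)
    (card_shadow_strongLink_le (ℬ := ℬ))
  have hsplit : (#𝒜 : ℝ) ≤ #(strongLink 𝒜 ℬ S) + #(avoiding ℬ S) + #(avoiding 𝒜 S) :=
    mod_cast h.card_le_card_strongLink_add hS
  have hsum : (degree ℬ S : ℝ) + #(avoiding ℬ S) = #ℬ := mod_cast degree_add_card_avoiding
  linarith

lemma exists_card_le_chooseConst_mul_rpow_add (hs : s ≠ 0) : ∃ K : ℝ, 1 ≤ K ∧
    ∀ ⦃r : ℕ⦄ ⦃𝒜 ℬ : Finset (Finset ℕ)⦄, IsValid r (s + 1) 𝒜 ℬ →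
      (#𝒜 : ℝ) ≤ chooseConst s * (#ℬ : ℝ) ^ (1 + (s : ℝ)⁻¹) + K * #ℬ := by
  have hφ := chooseConst_pos (s := s)
  obtain ⟨M, hM, hdense⟩ := exists_card_le_mul_degree (α := ℕ) hs hφ
  refine ⟨M, hM, fun r 𝒜 ℬ h => ?_⟩
  induction hb : #ℬ using Nat.strong_induction_on generalizing 𝒜 ℬ with | _ b ih
  subst hb
  rcases le_or_gt (#𝒜 : ℝ) (chooseConst s * (#ℬ : ℝ) ^ (1 + (s : ℝ)⁻¹)) with hsmall | hlarge
  · exact hsmall.trans (le_add_of_nonneg_right (by positivity))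
  have hne : 𝒜.Nonempty := by
    refine card_pos.1 (Nat.cast_pos (α := ℝ) |>.1 (lt_of_le_of_lt ?_ hlarge))
    positivity
  obtain ⟨S, hS, hpos, hdeg⟩ := hdense h hne hlarge.le
  have hsum := degree_add_card_avoiding (ℱ := ℬ) (S := S)
  have hsumℝ : (degree ℬ S : ℝ) + #(avoiding ℬ S) = #ℬ := mod_cast hsum
  have hrest := ih _ (by omega) _ _ (h.avoiding S) rfl
  have hsuper : (degree ℬ S : ℝ) ^ (1 + (s : ℝ)⁻¹) + (#(avoiding ℬ S) : ℝ) ^ (1 + (s : ℝ)⁻¹) ≤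
      (#ℬ : ℝ) ^ (1 + (s : ℝ)⁻¹) := by
    rw [← hsumℝ]
    exact Real.add_rpow_le_rpow_add (by positivity) (by positivity) (by simp)
  calc (#𝒜 : ℝ) ≤ _ := h.card_le_rpow_degree_add hs hS
    _ ≤ chooseConst s * (degree ℬ S : ℝ) ^ (1 + (s : ℝ)⁻¹) + M * degree ℬ S +
        (chooseConst s * (#(avoiding ℬ S) : ℝ) ^ (1 + (s : ℝ)⁻¹) + M * #(avoiding ℬ S)) := by
      gcongr
    _ = chooseConst s * ((degree ℬ S : ℝ) ^ (1 + (s : ℝ)⁻¹) +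
        (#(avoiding ℬ S) : ℝ) ^ (1 + (s : ℝ)⁻¹)) + M * (degree ℬ S + #(avoiding ℬ S)) := by ring
    _ ≤ _ := by rw [hsumℝ]; gcongr

end LargePairs

section LargeCascades

open Filter

variable {q : ℕ} {C D w : ℝ}

lemma eventually_mul_rpow_le {a b : ℝ} (hab : a < b) (D : ℝ) {E : ℝ} (hE : 0 < E) :
    ∀ᶠ n : ℕ in atTop, D * (n : ℝ) ^ a ≤ E * (n : ℝ) ^ b := by
  have hlim : Tendsto (fun n : ℕ => (n : ℝ) ^ (b - a)) atTop atTop :=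
    (tendsto_rpow_atTop (sub_pos.2 hab)).comp tendsto_natCast_atTop_atTop
  filter_upwards [hlim.eventually_ge_atTop (D / E), eventually_gt_atTop 0] with n hn hpos
  have hn0 : (0 : ℝ) < n := mod_cast hpos
  rw [div_le_iff₀' hE] at hn
  calc D * (n : ℝ) ^ a ≤ E * (n : ℝ) ^ (b - a) * (n : ℝ) ^ a := by gcongr
    _ = E * (n : ℝ) ^ b := by rw [mul_assoc, ← Real.rpow_add hn0, sub_add_cancel]

lemma div_two_pow_le_factorial_mul_choose_floor {n : ℕ} {x : ℝ} (hx : 2 * (n : ℝ) ≤ x) :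
    (x / 2) ^ n ≤ n.factorial * (⌊x⌋₊.choose n : ℝ) := by
  have hx0 : 0 ≤ x := le_trans (by positivity) hx
  have hn : n ≤ ⌊x⌋₊ := Nat.le_floor (by linarith)
  calc (x / 2) ^ n ≤ ((⌊x⌋₊ + 1 - n : ℕ) : ℝ) ^ n := by
        gcongr
        rw [Nat.cast_sub (by omega), Nat.cast_add_one]
        linarith [Nat.lt_floor_add_one x]
    _ ≤ _ := mod_cast (Nat.pow_sub_le_descFactorial _ n).trans
      (Nat.descFactorial_eq_factorial_mul_choose _ n).le

lemma eventually_exists_choose_le (hq : q ≠ 0) (D : ℝ) {δ : ℝ} (hδ : 0 < δ) (hδ1 : δ ≤ 1) :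
    ∀ᶠ n : ℕ in atTop, ∃ j, q + 2 ≤ j ∧ j.choose q ≤ n ∧
      D * (n : ℝ) ^ (1 + ((q + 1 : ℕ) : ℝ)⁻¹) ≤ j.choose (q + 1) ∧
      (j : ℝ) ≤ δ * (n : ℝ) ^ (q⁻¹ : ℝ) := by
  have hlim : Tendsto (fun n : ℕ => δ * (n : ℝ) ^ (q⁻¹ : ℝ)) atTop atTop :=
    ((tendsto_rpow_atTop (by positivity)).comp tendsto_natCast_atTop_atTop).const_mul_atTop hδ
  have hexp : 1 + ((q + 1 : ℕ) : ℝ)⁻¹ < 1 + (q : ℝ)⁻¹ := by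
    gcongr
    exact q.lt_succ_self
  filter_upwards [hlim.eventually_ge_atTop (2 * (q + 2)), eventually_mul_rpow_le hexp D
    (E := (δ / 2) ^ (q + 1) / (q + 1).factorial) (by positivity)] with n hx hD
  set x : ℝ := δ * (n : ℝ) ^ (q⁻¹ : ℝ) with hxn
  have hx0 : 0 ≤ x := by positivity
  refine ⟨⌊x⌋₊, Nat.le_floor ?_, ?_, ?_, Nat.floor_le hx0⟩
  · push_cast
    linarith [q.cast_nonneg (α := ℝ)]
  · rw [← Nat.cast_le (α := ℝ)]
    calc (⌊x⌋₊.choose q : ℝ) ≤ (⌊x⌋₊ : ℝ) ^ q := mod_cast Nat.choose_le_pow _ q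
      _ ≤ ((n : ℝ) ^ (q⁻¹ : ℝ)) ^ q := by
        gcongr
        exact (Nat.floor_le hx0).trans (mul_le_of_le_one_left (by positivity) hδ1)
      _ = n := Real.rpow_inv_natCast_pow (by positivity) hq
  · calc D * (n : ℝ) ^ (1 + ((q + 1 : ℕ) : ℝ)⁻¹)
        ≤ (δ / 2) ^ (q + 1) / (q + 1).factorial * (n : ℝ) ^ (1 + (q : ℝ)⁻¹) := hD
      _ = (x / 2) ^ (q + 1) / (q + 1).factorial := by
        rw [hxn, mul_div_right_comm, mul_pow, ← Real.rpow_mul_natCast (by positivity)]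
        push_cast
        rw [mul_add_one, inv_mul_cancel₀ (by positivity), mul_div_right_comm]
      _ ≤ ⌊x⌋₊.choose (q + 1) := by
        rw [div_le_iff₀' (by positivity)]
        refine div_two_pow_le_factorial_mul_choose_floor ?_
        push_cast
        linarith

lemma choose_add_two_le_mul_rpow (hq : q ≠ 0) {j m n : ℕ} (hC : 1 ≤ C) (hw : 0 ≤ w) (hw1 : w ≤ 1)
    (hj : (j : ℝ) ≤ w / C * (m : ℝ) ^ (q⁻¹ : ℝ))
    (hm : (m : ℝ) * (n : ℝ) ^ (((q + 1 : ℕ) : ℝ)⁻¹) ≤ C * n) (hn : 0 < n) :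
    (j.choose (q + 2) : ℝ) ≤ w * (n : ℝ) ^ (1 + ((q + 1 : ℕ) : ℝ)⁻¹) := by
  set z : ℝ := (n : ℝ) ^ (((q + 1 : ℕ) : ℝ)⁻¹)
  have hz0 : 0 < z := by positivity
  have hzn : z ^ (q + 1) = n := Real.rpow_inv_natCast_pow n.cast_nonneg q.succ_ne_zero
  have hroot : (m : ℝ) ^ (q⁻¹ : ℝ) ≤ C * z := by
    rw [Real.rpow_inv_le_iff_of_pos (by positivity) (by positivity) (by positivity),
      Real.rpow_natCast]
    refine le_of_mul_le_mul_right (hm.trans ?_) hz0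
    calc C * (n : ℝ) ≤ C ^ q * n := by
          gcongr
          exact le_self_pow₀ hC hq
      _ = (C * z) ^ q * z := by
        rw [← hzn]
        ring
  have hjz : (j : ℝ) ≤ w * z := calc
    (j : ℝ) ≤ w / C * (C * z) := hj.trans (by gcongr)
    _ = w * z := by field_simp
  calc (j.choose (q + 2) : ℝ) ≤ (j : ℝ) ^ (q + 2) := mod_cast Nat.choose_le_pow j (q + 2)
    _ ≤ (w * z) ^ (q + 2) := by gcongr
    _ = w ^ (q + 2) * (n * z) := by
      rw [← hzn]
      ring
    _ ≤ w * (n * z) := by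
      gcongr
      exact pow_le_of_le_one hw hw1 (by omega)
    _ = w * (n : ℝ) ^ (1 + ((q + 1 : ℕ) : ℝ)⁻¹) := by
      rw [Real.rpow_one_add' n.cast_nonneg (by positivity)]

-- Adding to `𝒜` a cone over the `(q + 1)`-subsets of a set of `j` points adds `C(j, q + 1)` members
-- but only `C(j, q) ≤ m` sets to the shadow.
lemma eventually_card_add_mul_rpow_le (q : ℕ) (hC : 1 ≤ C) (D : ℝ) (hw : 0 < w) (hw1 : w ≤ 1) :
    ∀ᶠ m : ℕ in atTop, ∀ ⦃n : ℕ⦄ ⦃c : ℕ → ℕ⦄ ⦃𝒜 : Finset (Finset ℕ)⦄,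
      StrictMonoOn c (Set.Icc 1 (q + 1)) → 2 ≤ c 1 → (𝒜 : Set (Finset ℕ)).Sized (q + 2) →
      n = ∑ i ∈ Icc 1 (q + 1), (c i).choose i → #(∂ 𝒜) + m ≤ n →
      (m : ℝ) * (n : ℝ) ^ (((q + 1 : ℕ) : ℝ)⁻¹) ≤ C * n →
      w * (n : ℝ) ^ (1 + ((q + 1 : ℕ) : ℝ)⁻¹) ≤ #𝒜 →
      #𝒜 + D * (m : ℝ) ^ (1 + ((q + 1 : ℕ) : ℝ)⁻¹) ≤
        (∑ i ∈ Icc 1 (q + 1), (c i).choose (i + 1) : ℕ) := by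
  rcases eq_or_ne q 0 with rfl | hq
  · filter_upwards [eventually_gt_atTop ⌊C⌋₊] with m hm n c 𝒜 _ _ _ _ hmn hmC _
    have hn : (0 : ℝ) < n := mod_cast (by omega)
    rw [Nat.floor_lt (by positivity)] at hm
    rw [zero_add, Nat.cast_one, inv_one, Real.rpow_one] at hmC
    exact absurd (le_of_mul_le_mul_right hmC hn) hm.not_ge
  · filter_upwards [eventually_gt_atTop 0, eventually_exists_choose_le hq D (δ := w / C)
      (by positivity) (div_le_one_of_le₀ (hw1.trans hC) (by positivity))] with
      m hm0 hm n c 𝒜 hc h1 h𝒜 hn hmn hmC hlarge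
    obtain ⟨j, hj, hjm, hjD, hjw⟩ := hm
    have hj𝒜 : j.choose (q + 2) ≤ #𝒜 := by
      have := (choose_add_two_le_mul_rpow hq hC hw.le hw1 hjw hmC (by omega)).trans hlarge
      exact_mod_cast this
    have hcone := card_add_choose_le_of_card_shadow_add_choose_le hc h1 h𝒜 hj hj𝒜 (by omega)
    calc (#𝒜 : ℝ) + D * (m : ℝ) ^ (1 + ((q + 1 : ℕ) : ℝ)⁻¹) ≤ #𝒜 + j.choose (q + 1) := by gcongr
      _ ≤ _ := mod_cast hcone

lemma exists_card_add_mul_rpow_le (q : ℕ) (hC : 1 ≤ C) (hD : 0 ≤ D) (hw : 0 < w) (hw1 : w ≤ 1) :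
    ∃ μ, ∀ ⦃m n : ℕ⦄ ⦃c : ℕ → ℕ⦄ ⦃𝒜 : Finset (Finset ℕ)⦄,
      StrictMonoOn c (Set.Icc 1 (q + 1)) → μ < c 1 → (𝒜 : Set (Finset ℕ)).Sized (q + 2) →
      n = ∑ i ∈ Icc 1 (q + 1), (c i).choose i → #(∂ 𝒜) + m ≤ n →
      (m : ℝ) * (n : ℝ) ^ (((q + 1 : ℕ) : ℝ)⁻¹) ≤ C * n →
      w * (n : ℝ) ^ (1 + ((q + 1 : ℕ) : ℝ)⁻¹) ≤ #𝒜 →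
      #𝒜 + D * (m : ℝ) ^ (1 + ((q + 1 : ℕ) : ℝ)⁻¹) ≤
        (∑ i ∈ Icc 1 (q + 1), (c i).choose (i + 1) : ℕ) := by
  obtain ⟨N, hN⟩ := eventually_atTop.1 (eventually_card_add_mul_rpow_le q hC D hw hw1)
  set B : ℝ := D * (N : ℝ) ^ (1 + ((q + 1 : ℕ) : ℝ)⁻¹)
  refine ⟨⌈B⌉₊ + 2, fun m n c 𝒜 hc h1 h𝒜 hn hmn hmC hlarge => ?_⟩
  rcases Nat.eq_zero_or_pos m with rfl | hm
  · rw [Nat.cast_zero, Real.zero_rpow (by positivity), mul_zero, add_zero]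
    exact_mod_cast card_le_of_card_shadow_le hc (by omega) h𝒜 (by omega)
  rcases le_total N m with hNm | hmN
  · exact hN m hNm hc (by omega) h𝒜 hn hmn hmC hlarge
  · have hadd := card_add_le_of_card_shadow_lt hc (by omega) (by omega) h𝒜 (by omega)
    calc (#𝒜 : ℝ) + D * (m : ℝ) ^ (1 + ((q + 1 : ℕ) : ℝ)⁻¹)
        ≤ #𝒜 + D * (N : ℝ) ^ (1 + ((q + 1 : ℕ) : ℝ)⁻¹) := by gcongr
      _ ≤ (#𝒜 : ℝ) + (c 1 - 1 : ℕ) := by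
        gcongr
        exact (Nat.le_ceil B).trans (mod_cast (by omega))
      _ ≤ _ := mod_cast hadd

end LargeCascades

section Stability

open Filter

variable {s : ℕ} {g C M b m t φ : ℝ}

lemma exists_card_le_card_strongLink_add_mul_rpow (hs : s ≠ 0) : ∃ D : ℝ, 0 ≤ D ∧
    ∀ ⦃r : ℕ⦄ ⦃𝒜 ℬ : Finset (Finset ℕ)⦄ ⦃S : Finset ℕ⦄, IsValid r (s + 1) 𝒜 ℬ → #S + s = r →
      (#𝒜 : ℝ) ≤ #(strongLink 𝒜 ℬ S) + D * (#(avoiding ℬ S) : ℝ) ^ (1 + (s : ℝ)⁻¹) := by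
  obtain ⟨K, hK, hcard⟩ := exists_card_le_chooseConst_mul_rpow_add hs
  have hφ := chooseConst_pos (s := s)
  refine ⟨1 + chooseConst s + K, by positivity, fun r 𝒜 ℬ S h hS => ?_⟩
  have hsplit : (#𝒜 : ℝ) ≤ #(strongLink 𝒜 ℬ S) + #(avoiding ℬ S) + #(avoiding 𝒜 S) :=
    mod_cast h.card_le_card_strongLink_add hS
  have hself : (#(avoiding ℬ S) : ℝ) ≤ (#(avoiding ℬ S) : ℝ) ^ (1 + (s : ℝ)⁻¹) := by
    rcases Nat.eq_zero_or_pos #(avoiding ℬ S) with h0 | hpos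
    · rw [h0, Nat.cast_zero]
      positivity
    · exact Real.self_le_rpow_of_one_le (mod_cast hpos) (by simp)
  have hKself := mul_le_mul_of_nonneg_left hself (zero_le_one.trans hK)
  linarith [hcard (h.avoiding S)]

-- The defect of superadditivity of `x ^ (1 + g)` at `t + m = b` is at least a constant times
-- `min t m * b ^ g`, which rules out `t ≤ m` once `b ^ g` is large.
lemma mul_rpow_le_of_mul_rpow_le_add (hg : 0 < g) (hφ : 0 < φ) (ht : 0 < t) (hm : 0 ≤ m)
    (htm : t + m = b) (hbt : b ≤ M * t) (hC : 0 ≤ C)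
    (hlarge : C / (φ * (1 - 2 ^ (-g))) * M < b ^ g)
    (h : φ * b ^ (1 + g) ≤ φ * t ^ (1 + g) + φ * m ^ (1 + g) + C * b) :
    m * b ^ g ≤ C / (φ * (1 - 2 ^ (-g))) * b := by
  have ⟨hd, _⟩ := one_sub_two_rpow_neg_mem_Ioc hg
  have hmin : min t m * b ^ g ≤ C / (φ * (1 - 2 ^ (-g))) * b := by
    have hconvex := mul_le_mul_of_nonneg_left
      (rpow_add_rpow_add_min_mul_le hg ht.le hm) hφ.le
    rw [htm] at hconvex
    rw [div_mul_eq_mul_div, le_div_iff₀ (by positivity)]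
    linarith
  rcases le_total m t with hmt | htm'
  · rwa [min_eq_right hmt] at hmin
  · rw [min_eq_left htm'] at hmin
    have : b ^ g * t ≤ C / (φ * (1 - 2 ^ (-g))) * M * t := calc
      b ^ g * t ≤ C / (φ * (1 - 2 ^ (-g))) * b := by rwa [mul_comm]
      _ ≤ C / (φ * (1 - 2 ^ (-g))) * (M * t) := by gcongr
      _ = _ := by ring
    exact absurd (le_of_mul_le_mul_right this ht) hlarge.not_ge

lemma exists_eventually_card_avoiding_mul_rpow_le (hs : s ≠ 0) : ∃ C : ℝ, 1 ≤ C ∧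
    ∀ᶠ n : ℕ in atTop, ∀ ⦃r : ℕ⦄ ⦃𝒜 ℬ : Finset (Finset ℕ)⦄, IsValid r (s + 1) 𝒜 ℬ → #ℬ = n →
      chooseConst s * (n : ℝ) ^ (1 + (s : ℝ)⁻¹) ≤ #𝒜 + 2 * n →
        ∃ S, #S + s = r ∧ (#(avoiding ℬ S) : ℝ) * (n : ℝ) ^ (s⁻¹ : ℝ) ≤ C * n := by
  have hφ := chooseConst_pos (s := s)
  have hg : 0 < (s : ℝ)⁻¹ := by positivity
  have ⟨_hd, _⟩ := one_sub_two_rpow_neg_mem_Ioc hg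
  obtain ⟨M, _hM, hdense⟩ := exists_card_le_mul_degree (α := ℕ) hs (half_pos hφ)
  obtain ⟨K, hK, hcard⟩ := exists_card_le_chooseConst_mul_rpow_add hs
  set C : ℝ := (3 + K) / (chooseConst s * (1 - 2 ^ (-(s : ℝ)⁻¹)))
  have hlim : Tendsto (fun n : ℕ => (n : ℝ) ^ (s⁻¹ : ℝ)) atTop atTop :=
    (tendsto_rpow_atTop hg).comp tendsto_natCast_atTop_atTop
  refine ⟨max 1 C, le_max_left _ _, ?_⟩
  filter_upwards [hlim.eventually_gt_atTop (C * M), hlim.eventually_gt_atTop (4 / chooseConst s),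
    eventually_gt_atTop 0] with n hn hn4 hpos r 𝒜 ℬ h hℬ hlarge
  have hn0 : (0 : ℝ) < n := mod_cast hpos
  rw [div_lt_iff₀' hφ] at hn4
  have hhalf : chooseConst s / 2 * (n : ℝ) ^ (1 + (s : ℝ)⁻¹) < #𝒜 := by
    rw [Real.rpow_one_add' hn0.le (by positivity)] at hlarge ⊢
    nlinarith
  have hne : 𝒜.Nonempty := by
    refine card_pos.1 (Nat.cast_pos (α := ℝ) |>.1 (lt_of_le_of_lt ?_ hhalf))
    positivity
  obtain ⟨S, hS, hdeg, hMdeg⟩ := hdense h hne (by rw [hℬ]; exact hhalf.le)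
  refine ⟨S, hS, ?_⟩
  have hsum : (degree ℬ S : ℝ) + #(avoiding ℬ S) = n := by
    rw [← hℬ]
    exact_mod_cast degree_add_card_avoiding
  have hS𝒜 := h.card_le_rpow_degree_add hs hS
  have hrest := hcard (h.avoiding S)
  have hKle : K * #(avoiding ℬ S) ≤ K * n := by
    gcongr
    exact hℬ ▸ card_filter_le _ _
  rw [hℬ] at hS𝒜 hMdeg
  refine (mul_rpow_le_of_mul_rpow_le_add hg hφ (mod_cast hdeg) (Nat.cast_nonneg _) hsum hMdeg
    (by positivity) hn (by linarith)).trans ?_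
  gcongr
  exact le_max_right _ _

lemma eventually_half_mul_rpow_le (hs : s ≠ 0) (hφ : 0 < φ) (C D : ℝ) (hD : 0 ≤ D) :
    ∀ᶠ n : ℕ in atTop, ∀ ⦃x : ℝ⦄ ⦃m : ℕ⦄, m ≤ n → (m : ℝ) * (n : ℝ) ^ (s⁻¹ : ℝ) ≤ C * n →
      φ * (n : ℝ) ^ (1 + (s : ℝ)⁻¹) ≤ x + D * (m : ℝ) ^ (1 + (s : ℝ)⁻¹) + 2 * n →
        φ / 2 * (n : ℝ) ^ (1 + (s : ℝ)⁻¹) ≤ x := by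
  have hg : 0 < (s : ℝ)⁻¹ := by positivity
  filter_upwards [eventually_mul_rpow_le (lt_add_of_pos_right 1 hg) (D * C + 2) (half_pos hφ)] with
    n hn x m hmn hmC hx
  have hm : D * (m : ℝ) ^ (1 + (s : ℝ)⁻¹) ≤ D * (C * n) := by
    rw [Real.rpow_one_add' m.cast_nonneg (by positivity)]
    refine mul_le_mul_of_nonneg_left (le_trans ?_ hmC) hD
    gcongr
  rw [Real.rpow_one] at hn
  linarith

theorem exists_card_le_sum_choose_succ (hs : s ≠ 0) : ∃ μ, ∀ ⦃r : ℕ⦄ ⦃c : ℕ → ℕ⦄,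
    StrictMonoOn c (Set.Icc 1 s) → μ < c 1 → ∀ ⦃𝒜 ℬ : Finset (Finset ℕ)⦄,
      IsValid r (s + 1) 𝒜 ℬ → #ℬ = ∑ i ∈ Icc 1 s, (c i).choose i →
        #𝒜 ≤ ∑ i ∈ Icc 1 s, (c i).choose (i + 1) := by
  obtain ⟨q, rfl⟩ := Nat.exists_eq_add_one_of_ne_zero hs
  have hφ := chooseConst_pos (s := q + 1)
  obtain ⟨D, hD, hsplit⟩ := exists_card_le_card_strongLink_add_mul_rpow hs
  obtain ⟨C, hC, hstable⟩ := exists_eventually_card_avoiding_mul_rpow_le hs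
  obtain ⟨μ, hμ⟩ := exists_card_add_mul_rpow_le q hC hD
    (w := min 1 (chooseConst (q + 1) / 2)) (by positivity) (min_le_left _ _)
  obtain ⟨N, hN⟩ := eventually_atTop.1
    (hstable.and (eventually_half_mul_rpow_le hs hφ C D hD))
  refine ⟨max μ N, fun r c hc h1 𝒜 ℬ h hℬ => le_of_not_gt fun hlt => ?_⟩
  have hc1 : c 1 ≤ #ℬ := by
    rw [hℬ]
    simpa using single_le_sum (f := fun i => (c i).choose i) (fun _ _ => Nat.zero_le _)
      (mem_Icc.2 ⟨le_rfl, q.succ_pos⟩)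
  obtain ⟨hstable, hhalf⟩ := hN #ℬ (by omega)
  have hlower := chooseConst_mul_rpow_le_sum_choose_add hs hc hℬ
  have hlt' : ((∑ i ∈ Icc 1 (q + 1), (c i).choose (i + 1) : ℕ) : ℝ) < #𝒜 := mod_cast hlt
  obtain ⟨S, hS, hSC⟩ := hstable h rfl (by linarith)
  have h𝒜 := hsplit h hS
  have hlink := hhalf (x := #(strongLink 𝒜 ℬ S)) (m := #(avoiding ℬ S)) (card_filter_le _ _) hSC
    (by linarith)
  have hshadow := card_shadow_strongLink_le (𝒜 := 𝒜) (ℬ := ℬ) (S := S)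
  have hdeg := degree_add_card_avoiding (ℱ := ℬ) (S := S)
  have hmain := hμ hc (by omega) (sized_strongLink h.sized_left hS) hℬ
    (m := #(avoiding ℬ S)) (by omega) hSC <|
    (mul_le_mul_of_nonneg_right (min_le_right _ _) (by positivity)).trans hlink
  linarith

end Stability

section Padding

variable {α : Type*} [DecidableEq α] {s : ℕ} {X : Finset α} {𝒜 ℱ : Finset (Finset α)}

lemma card_image_union_right (h : ∀ F ∈ ℱ, Disjoint F X) : #(ℱ.image (· ∪ X)) = #ℱ := by
  refine card_image_of_injOn fun F hF G hG hFG => ?_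
  simpa only [union_sdiff_cancel_right (h F hF), union_sdiff_cancel_right (h G hG)]
    using congrArg (· \ X) hFG

lemma sized_image_union_right {r : ℕ} (h : ∀ F ∈ ℱ, Disjoint F X)
    (hr : (ℱ : Set (Finset α)).Sized r) :
    (ℱ.image (· ∪ X) : Set (Finset α)).Sized (r + #X) := by
  rw [coe_image]
  rintro _ ⟨F, hF, rfl⟩
  rw [card_union_of_disjoint (h F hF), hr hF]

lemma disjoint_of_mem_shadow (h : ∀ A ∈ 𝒜, Disjoint A X) : ∀ B ∈ ∂ 𝒜, Disjoint B X := by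
  intro B hB
  obtain ⟨A, hA, hBA⟩ := exists_subset_of_mem_shadow hB
  exact (h A hA).mono_left hBA

lemma isValid_image_union_right (h𝒜 : (𝒜 : Set (Finset α)).Sized (s + 1))
    (h : ∀ A ∈ 𝒜, Disjoint A X) :
    IsValid (s + #X) (s + 1) (𝒜.image (· ∪ X)) ((∂ 𝒜).image (· ∪ X)) where
  sized_left := by
    rw [add_right_comm]
    exact sized_image_union_right h h𝒜
  sized_right := sized_image_union_right (disjoint_of_mem_shadow h) h𝒜.shadow
  le_card := by
    refine forall_mem_image.2 fun A hA => ?_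
    rw [← h𝒜 hA]
    refine card_le_card fun x hx => mem_filter.2 ⟨mem_union_left X hx, mem_image.2 ?_⟩
    refine ⟨A.erase x, erase_mem_shadow hA hx, ?_⟩
    rw [erase_union_distrib, erase_eq_of_notMem (disjoint_left.1 (h A hA) hx)]

lemma exists_isValid_card_eq_card_shadow [Infinite α] (h𝒜 : (𝒜 : Set (Finset α)).Sized (s + 1))
    (n : ℕ) : ∃ 𝒜' ℬ' : Finset (Finset α),
      IsValid (s + n) (s + 1) 𝒜' ℬ' ∧ #ℬ' = #(∂ 𝒜) ∧ #𝒜' = #𝒜 := by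
  obtain ⟨X, hX, rfl⟩ := (𝒜.sup id).finite_toSet.infinite_compl.exists_subset_card_eq n
  have hdisj : ∀ A ∈ 𝒜, Disjoint A X := fun A hA =>
    disjoint_right.2 fun x hx hxA => hX hx (mem_coe.2 (le_sup (f := id) hA hxA))
  exact ⟨_, _, isValid_image_union_right h𝒜 hdisj,
    card_image_union_right (disjoint_of_mem_shadow hdisj), card_image_union_right hdisj⟩

end Padding

section ValidPair

variable {r k : ℕ} {𝒜 ℬ : Finset (Finset ℕ)}

lemma filter_subset_eq_image_erase {α : Type*} [DecidableEq α] {ℬ : Finset (Finset α)}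
    {A : Finset α} (hA : #A = r + 1) (hℬ : (ℬ : Set (Finset α)).Sized r) :
    {B ∈ ℬ | B ⊆ A} = {x ∈ A | A.erase x ∈ ℬ}.image A.erase := by
  ext B
  simp only [mem_filter, mem_image]
  constructor
  · rintro ⟨hB, hBA⟩
    obtain ⟨x, hx, rfl⟩ := exists_eq_insert_iff.2 ⟨hBA, by rw [hA, hℬ hB]⟩
    exact ⟨x, ⟨mem_insert_self x B, by rwa [erase_insert hx]⟩, erase_insert hx⟩
  · rintro ⟨x, ⟨-, hx⟩, rfl⟩
    exact ⟨hx, erase_subset x A⟩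

lemma validPair_iff_isValid : ValidPair (r + 1) k 𝒜 ℬ ↔ IsValid r k 𝒜 ℬ := by
  have hcard {A : Finset ℕ} (hA : #A = r + 1) (hℬ : (ℬ : Set (Finset ℕ)).Sized r) :
      #{B ∈ ℬ | B ⊆ A} = #{x ∈ A | A.erase x ∈ ℬ} := by
    rw [filter_subset_eq_image_erase hA hℬ,
      card_image_of_injOn (A.erase_injOn.mono (coe_subset.2 (filter_subset _ _)))]
  constructor
  · rintro ⟨h𝒜, hℬ, h⟩
    exact ⟨fun A => h𝒜 A, fun B => hℬ B, fun A hA => hcard (h𝒜 A hA) hℬ ▸ h A hA⟩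
  · rintro ⟨h𝒜, hℬ, h⟩
    exact ⟨fun A hA => h𝒜 hA, fun B hB => hℬ hB,
      fun A hA => (hcard (h𝒜 hA) hℬ).symm ▸ h A hA⟩

lemma exists_validPair_card_eq_sum_choose {c : ℕ → ℕ} {s : ℕ} (hc : StrictMonoOn c (Set.Icc 1 s))
    (h1 : 2 ≤ c 1) (n : ℕ) : ∃ 𝒜 ℬ : Finset (Finset ℕ), ValidPair (s + n + 1) (s + 1) 𝒜 ℬ ∧
      #ℬ = ∑ i ∈ Icc 1 s, (c i).choose i ∧ #𝒜 = ∑ i ∈ Icc 1 s, (c i).choose (i + 1) := by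
  obtain ⟨𝒜, ℬ, hvalid, hℬ, h𝒜⟩ := exists_isValid_card_eq_card_shadow
    (sized_cascade (ℰ := ∅) (d := 1) hc (by simp) (by simp)) n
  refine ⟨𝒜, ℬ, validPair_iff_isValid.2 hvalid, ?_, ?_⟩
  · rw [hℬ, shadow_cascade hc h1 (by simp) (by simp), card_cascade hc (by simp)]
    simp
  · rw [h𝒜, card_cascade hc (by simp), card_empty, add_zero]

end ValidPair
end PartialShadow

theorem stmt_0 :
    ∀ k : ℕ, 2 ≤ k → ∃ μ : ℕ, ∀ r : ℕ, k ≤ r → ∀ c : ℕ → ℕ,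
      StrictMonoOn c (Set.Icc 1 (k - 1)) → μ < c 1 →
      f r k (∑ i ∈ Finset.Icc 1 (k - 1), (c i).choose i) =
        ∑ i ∈ Finset.Icc 1 (k - 1), (c i).choose (i + 1) := by
  intro k hk
  obtain ⟨s, rfl⟩ := Nat.exists_eq_add_of_le' (show 1 ≤ k by omega)
  obtain ⟨μ, hμ⟩ := PartialShadow.exists_card_le_sum_choose_succ (s := s) (by omega)
  refine ⟨max μ 1, fun r hr c hc hc1 => ?_⟩
  obtain ⟨hμc, h1c⟩ := max_lt_iff.1 hc1
  rw [Nat.add_sub_cancel] at hc ⊢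
  obtain ⟨n, rfl⟩ : ∃ n, r = s + n + 1 := ⟨r - (s + 1), by omega⟩
  refine IsGreatest.csSup_eq ⟨PartialShadow.exists_validPair_card_eq_sum_choose hc h1c n, ?_⟩
  rintro _ ⟨𝒜, ℬ, hvalid, hℬ, rfl⟩
  exact hμ hc hμc (PartialShadow.validPair_iff_isValid.1 hvalid) hℬ
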